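/- arXiv:2401.14875 — 9 statements merged into one kernel-verified Lean document; each statement's English description precedes it below -/
import Mathlib

section
/- Let (C, Δ_C, R_C) be a λ-weighted Rota-Baxter Lie coalgebra over a field k. Then the dual space C* equipped with the bracket [f,g] = (f⊗g)∘Δ_C is a Lie algebra, and the map R_C* : C* → C* given by R_C*(f) = f∘R_C satisfies [R_C*(f), R_C*(g)] = R_C*([R_C*(f), g] + [f, R_C*(g)] + λ[f,g]) for all f,g ∈ C*; that is, (C*, [·,·], R_C*) is a Rota-Baxter Lie algebra of weight λ. -/
/-!
STATEMENT 0: The dual of a `λ`-weighted Rota-Baxter Lie coalgebra `(C, Δ_C, R_C)`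
is a `λ`-weighted Rota-Baxter Lie algebra `(C*, [·,·], R_C*)`, where
`[f,g] = (f⊗g)∘Δ_C` and `R_C*(f) = f∘R_C`.
-/

open TensorProduct LinearMap

section

variable {k : Type*} [Field k]
variable {C : Type*} [AddCommGroup C] [Module k C]

/-- Co-antisymmetry of a cobracket: `Δ = -τΔ`. -/
def CoAnti (Δ : C →ₗ[k] C ⊗[k] C) : Prop :=
  Δ = -((TensorProduct.comm k C C).toLinearMap ∘ₗ Δ)

/-- The co-Jacobi identity `(I⊗Δ)Δ - (Δ⊗I)Δ + (I⊗τ)(Δ⊗I)Δ = 0`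
(with the canonical associator inserted). -/
def CoJacobi (Δ : C →ₗ[k] C ⊗[k] C) : Prop :=
  lTensor C Δ ∘ₗ Δ
    - (TensorProduct.assoc k C C C).toLinearMap ∘ₗ rTensor C Δ ∘ₗ Δ
    + lTensor C (TensorProduct.comm k C C).toLinearMap ∘ₗ
        (TensorProduct.assoc k C C C).toLinearMap ∘ₗ rTensor C Δ ∘ₗ Δ = 0

/-- The `λ`-weighted Rota-Baxter identity for a coalgebra:
`(R⊗R)Δ = (I⊗R + R⊗I + λI) Δ R`. -/
def IsRBO (lam : k) (Δ : C →ₗ[k] C ⊗[k] C) (R : C →ₗ[k] C) : Prop :=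
  TensorProduct.map R R ∘ₗ Δ
    = (lTensor C R + rTensor C R + lam • (LinearMap.id : C ⊗[k] C →ₗ[k] C ⊗[k] C)) ∘ₗ Δ ∘ₗ R

/-- `λ`-weighted Rota-Baxter Lie coalgebra. -/
def IsRBLC (lam : k) (Δ : C →ₗ[k] C ⊗[k] C) (R : C →ₗ[k] C) : Prop :=
  CoAnti Δ ∧ CoJacobi Δ ∧ IsRBO lam Δ R

/-- The dual bracket `[f,g] = (f⊗g)∘Δ` on `C* = Module.Dual k C`. -/
noncomputable def dualBracket (Δ : C →ₗ[k] C ⊗[k] C) (f g : Module.Dual k C) :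
    Module.Dual k C :=
  (TensorProduct.lid k k).toLinearMap ∘ₗ TensorProduct.map f g ∘ₗ Δ

/-- The dual Rota-Baxter operator `R_C*(f) = f ∘ R_C`. -/
def dualRB (R : C →ₗ[k] C) (f : Module.Dual k C) : Module.Dual k C := f ∘ₗ R

theorem dualBracket_coanti (Δ : C →ₗ[k] C ⊗[k] C) (h : CoAnti Δ) (f g : Module.Dual k C) :
    dualBracket Δ f g = -dualBracket Δ g f := by
  have key : ∀ t : C ⊗[k] C, TensorProduct.lid k k (TensorProduct.map f g
      (TensorProduct.comm k C C t)) = TensorProduct.lid k k (TensorProduct.map g f t) := by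
    intro t
    induction t with
    | zero => simp
    | tmul x y => simp [mul_comm]
    | add x y hx hy => simp only [map_add, hx, hy]
  ext c
  have hc : Δ c = -(TensorProduct.comm k C C (Δ c)) := LinearMap.congr_fun h c
  change TensorProduct.lid k k (TensorProduct.map f g (Δ c))
    = -TensorProduct.lid k k (TensorProduct.map g f (Δ c))
  rw [← key, ← map_neg, ← map_neg, ← hc]

/-- Evaluation of a triple of functionals. -/
noncomputable def tripleEval (f g h : Module.Dual k C) : C ⊗[k] (C ⊗[k] C) →ₗ[k] k :=
  (TensorProduct.lid k k).toLinearMap ∘ₗ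
    TensorProduct.map f ((TensorProduct.lid k k).toLinearMap ∘ₗ TensorProduct.map g h)

theorem dualBracket_right (Δ : C →ₗ[k] C ⊗[k] C) (f g h : Module.Dual k C) (c : C) :
    dualBracket Δ f (dualBracket Δ g h) c = tripleEval f g h (lTensor C Δ (Δ c)) := by
  change TensorProduct.lid k k (TensorProduct.map f (dualBracket Δ g h) (Δ c)) = _
  induction Δ c with
  | zero => simp
  | tmul x y => simp [tripleEval, dualBracket]
  | add x y hx hy => simp only [map_add, hx, hy]

theorem dualBracket_left (Δ : C →ₗ[k] C ⊗[k] C) (f g h : Module.Dual k C) (c : C) :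
    dualBracket Δ (dualBracket Δ f g) h c =
      tripleEval f g h (TensorProduct.assoc k C C C (rTensor C Δ (Δ c))) := by
  change TensorProduct.lid k k (TensorProduct.map (dualBracket Δ f g) h (Δ c)) = _
  induction Δ c with
  | zero => simp
  | tmul x y =>
    simp only [TensorProduct.map_tmul, rTensor_tmul, dualBracket, LinearMap.comp_apply]
    induction Δ x with
    | zero => simp
    | tmul a b => simp [tripleEval, mul_assoc]
    | add a b ha hb =>
      simp only [map_add, TensorProduct.add_tmul] at ha hb ⊢
      rw [ha, hb]
  | add x y hx hy => simp only [map_add, hx, hy]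

theorem tripleEval_swap (f g h : Module.Dual k C) (t : C ⊗[k] (C ⊗[k] C)) :
    tripleEval f g h (lTensor C (TensorProduct.comm k C C).toLinearMap t)
      = tripleEval f h g t := by
  induction t with
  | zero => simp
  | tmul x y =>
    induction y with
    | zero => simp
    | tmul a b => simp [tripleEval, mul_comm]
    | add a b ha hb => simp only [map_add, TensorProduct.tmul_add, ha, hb]
  | add x y hx hy => simp only [map_add, hx, hy]

theorem dualBracket_neg_left (Δ : C →ₗ[k] C ⊗[k] C) (f g : Module.Dual k C) :
    dualBracket Δ (-f) g = -dualBracket Δ f g := by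
  have key : TensorProduct.map (-f) g = -TensorProduct.map f g := by
    ext x y
    simp [TensorProduct.neg_tmul]
  ext c
  simp [dualBracket, key]

theorem dualBracket_cojacobi (Δ : C →ₗ[k] C ⊗[k] C) (hJ : CoJacobi Δ) (f g h : Module.Dual k C) :
    dualBracket Δ f (dualBracket Δ g h) - dualBracket Δ (dualBracket Δ f g) h
      + dualBracket Δ (dualBracket Δ f h) g = 0 := by
  ext c
  have hc := congrArg (tripleEval f g h) (LinearMap.congr_fun hJ c)
  simp only [LinearMap.add_apply, LinearMap.sub_apply, LinearMap.comp_apply, map_add, map_sub,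
    tripleEval_swap, LinearMap.zero_apply, map_zero, LinearEquiv.coe_coe] at hc
  simp only [LinearMap.add_apply, LinearMap.sub_apply, LinearMap.zero_apply, dualBracket_right,
    dualBracket_left]
  exact hc

theorem dualBracket_rb (lam : k) (Δ : C →ₗ[k] C ⊗[k] C) (R : C →ₗ[k] C) (hR : IsRBO lam Δ R)
    (f g : Module.Dual k C) :
    dualBracket Δ (dualRB R f) (dualRB R g)
      = dualRB R (dualBracket Δ (dualRB R f) g + dualBracket Δ f (dualRB R g)
          + lam • dualBracket Δ f g) := by
  ext c
  have hc := congrArg (fun t => TensorProduct.lid k k (TensorProduct.map f g t))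
    (LinearMap.congr_fun hR c)
  have e1 : TensorProduct.map (f ∘ₗ R) (g ∘ₗ R)
      = TensorProduct.map f g ∘ₗ TensorProduct.map R R := TensorProduct.map_comp _ _ _ _
  have e2 : TensorProduct.map (f ∘ₗ R) g = TensorProduct.map f g ∘ₗ rTensor C R := by
    ext x y
    simp
  have e3 : TensorProduct.map f (g ∘ₗ R) = TensorProduct.map f g ∘ₗ lTensor C R := by
    ext x y
    simp
  simp only [LinearMap.add_apply, LinearMap.comp_apply, map_add, LinearMap.smul_apply,
    map_smul, LinearMap.id_apply] at hc
  simp only [dualBracket, dualRB, e1, e2, e3, LinearMap.add_apply, LinearMap.comp_apply,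
    LinearMap.smul_apply, LinearEquiv.coe_coe]
  rw [hc]
  ring

theorem stmt0 (lam : k) (Δ : C →ₗ[k] C ⊗[k] C) (R : C →ₗ[k] C)
    (hC : IsRBLC lam Δ R) :
    -- `C*` with the bracket `[f,g] = (f⊗g)Δ` is a Lie algebra:
    (∀ f g : Module.Dual k C, dualBracket Δ f g = -dualBracket Δ g f) ∧
    (∀ f g h : Module.Dual k C,
      dualBracket Δ (dualBracket Δ f g) h + dualBracket Δ (dualBracket Δ g h) f
        + dualBracket Δ (dualBracket Δ h f) g = 0) ∧
    -- and `R_C*` is a Rota-Baxter operator of weight `λ` on it: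
    (∀ f g : Module.Dual k C,
      dualBracket Δ (dualRB R f) (dualRB R g)
        = dualRB R (dualBracket Δ (dualRB R f) g + dualBracket Δ f (dualRB R g)
            + lam • dualBracket Δ f g)) := by
  obtain ⟨hA, hJ, hR⟩ := hC
  refine ⟨dualBracket_coanti Δ hA, fun f g h => ?_, dualBracket_rb lam Δ R hR⟩
  have hj := dualBracket_cojacobi Δ hJ f g h
  rw [dualBracket_coanti Δ hA (dualBracket Δ g h) f, dualBracket_coanti Δ hA h f,
    dualBracket_neg_left, ← neg_eq_zero, ← hj]
  abel

end
end

section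
/- Let (C, Δ_C, R_C) be a λ-weighted Rota-Baxter Lie coalgebra and define Δ̃_C = (I⊗R_C + R_C⊗I + λI)Δ_C. Then (C, Δ̃_C, R_C) is again a λ-weighted Rota-Baxter Lie coalgebra: Δ̃_C = −τΔ̃_C, the co-Jacobi identity (I⊗Δ̃_C)Δ̃_C − (Δ̃_C⊗I)Δ̃_C + (I⊗τ)(Δ̃_C⊗I)Δ̃_C = 0 holds, and (R_C⊗R_C)Δ̃_C = (I⊗R_C + R_C⊗I + λI)Δ̃_C R_C. -/
/-!
STATEMENT 1: If `(C, Δ_C, R_C)` is a `λ`-weighted Rota-Baxter Lie coalgebra and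
`Δ̃_C = (I⊗R_C + R_C⊗I + λI) ∘ Δ_C`, then `(C, Δ̃_C, R_C)` is again a `λ`-weighted
Rota-Baxter Lie coalgebra.
-/

open TensorProduct LinearMap

section

variable {k : Type*} [Field k]
variable {C : Type*} [AddCommGroup C] [Module k C]

section Helpers

variable (lam : k) (Δ : C →ₗ[k] C ⊗[k] C) (R : C →ₗ[k] C)

/-- The operator `I⊗R + R⊗I + λI`. -/
def twoOp : C ⊗[k] C →ₗ[k] C ⊗[k] C :=
  lTensor C R + rTensor C R + lam • (LinearMap.id : C ⊗[k] C →ₗ[k] C ⊗[k] C)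

/-- `(Δ⊗I)` with the associator. -/
def opA : C ⊗[k] C →ₗ[k] C ⊗[k] (C ⊗[k] C) :=
  (TensorProduct.assoc k C C C).toLinearMap ∘ₗ rTensor C Δ

/-- `R` on the first factor. -/
def p1 : C ⊗[k] (C ⊗[k] C) →ₗ[k] C ⊗[k] (C ⊗[k] C) := rTensor (C ⊗[k] C) R
/-- `R` on the second factor. -/
def p2 : C ⊗[k] (C ⊗[k] C) →ₗ[k] C ⊗[k] (C ⊗[k] C) := lTensor C (rTensor C R)
/-- `R` on the third factor. -/
def p3 : C ⊗[k] (C ⊗[k] C) →ₗ[k] C ⊗[k] (C ⊗[k] C) := lTensor C (lTensor C R)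

/-- The symmetric operator on the triple tensor product. -/
def qOp : C ⊗[k] (C ⊗[k] C) →ₗ[k] C ⊗[k] (C ⊗[k] C) :=
  p1 R ∘ₗ p2 R + p1 R ∘ₗ p3 R + p2 R ∘ₗ p3 R + lam • (p1 R + p2 R + p3 R)
    + (lam * lam) • LinearMap.id

theorem assoc_l (t : (C ⊗[k] C) ⊗[k] C) :
    TensorProduct.assoc k C C C (rTensor C (lTensor C R) t)
      = p2 R (TensorProduct.assoc k C C C t) := by
  refine LinearMap.congr_fun (f := (TensorProduct.assoc k C C C).toLinearMap ∘ₗ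
    rTensor C (lTensor C R)) (g := p2 R ∘ₗ (TensorProduct.assoc k C C C).toLinearMap) ?_ t
  ext; simp [p2]

theorem assoc_r (t : (C ⊗[k] C) ⊗[k] C) :
    TensorProduct.assoc k C C C (rTensor C (rTensor C R) t)
      = p1 R (TensorProduct.assoc k C C C t) := by
  refine LinearMap.congr_fun (f := (TensorProduct.assoc k C C C).toLinearMap ∘ₗ
    rTensor C (rTensor C R)) (g := p1 R ∘ₗ (TensorProduct.assoc k C C C).toLinearMap) ?_ t
  ext; simp [p1]

theorem assoc_3 (t : (C ⊗[k] C) ⊗[k] C) :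
    TensorProduct.assoc k C C C (lTensor (C ⊗[k] C) R t)
      = p3 R (TensorProduct.assoc k C C C t) := by
  refine LinearMap.congr_fun (f := (TensorProduct.assoc k C C C).toLinearMap ∘ₗ
    lTensor (C ⊗[k] C) R) (g := p3 R ∘ₗ (TensorProduct.assoc k C C C).toLinearMap) ?_ t
  ext; simp [p3]

theorem lr_comm {M N : Type*} [AddCommGroup M] [Module k M] [AddCommGroup N] [Module k N]
    {M' N' : Type*} [AddCommGroup M'] [Module k M'] [AddCommGroup N'] [Module k N']
    (f : M →ₗ[k] M') (g : N →ₗ[k] N') (t : M ⊗[k] N) :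
    lTensor M' g (rTensor N f t) = rTensor N' f (lTensor M g t) := by
  rw [← LinearMap.comp_apply, ← LinearMap.comp_apply, lTensor_comp_rTensor, rTensor_comp_lTensor]

theorem map_lr (t : C ⊗[k] C) :
    TensorProduct.map R R t = rTensor C R (lTensor C R t) := by
  rw [← LinearMap.comp_apply, rTensor_comp_lTensor]

theorem comm_l (t : C ⊗[k] C) : TensorProduct.comm k C C (lTensor C R t)
    = rTensor C R (TensorProduct.comm k C C t) := by
  refine LinearMap.congr_fun (f := (TensorProduct.comm k C C).toLinearMap ∘ₗ
    lTensor C R) (g := rTensor C R ∘ₗ (TensorProduct.comm k C C).toLinearMap) ?_ t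
  ext; simp

theorem comm_r (t : C ⊗[k] C) : TensorProduct.comm k C C (rTensor C R t)
    = lTensor C R (TensorProduct.comm k C C t) := by
  refine LinearMap.congr_fun (f := (TensorProduct.comm k C C).toLinearMap ∘ₗ
    rTensor C R) (g := lTensor C R ∘ₗ (TensorProduct.comm k C C).toLinearMap) ?_ t
  ext; simp

theorem opA_tilde (t : C ⊗[k] C) : opA (twoOp lam R ∘ₗ Δ) t
    = p1 R (opA Δ t) + p2 R (opA Δ t) + lam • opA Δ t := by
  simp only [opA, twoOp, LinearMap.comp_apply, LinearEquiv.coe_coe, rTensor_comp, rTensor_add,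
    rTensor_smul, rTensor_id, LinearMap.add_apply, LinearMap.smul_apply, LinearMap.id_apply,
    map_add, map_smul, assoc_l, assoc_r]
  abel

theorem opB_tilde (t : C ⊗[k] C) : lTensor C (twoOp lam R ∘ₗ Δ) t
    = p3 R (lTensor C Δ t) + p2 R (lTensor C Δ t) + lam • lTensor C Δ t := by
  simp only [twoOp, LinearMap.comp_apply, lTensor_comp, lTensor_add, p2, p3,
    lTensor_smul, lTensor_id, LinearMap.add_apply, LinearMap.smul_apply, LinearMap.id_apply]

variable {lam Δ R}

theorem opA_rb (h : IsRBO lam Δ R) (t : C ⊗[k] C) :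
    p1 R (p2 R (opA Δ t)) = opA (twoOp lam R ∘ₗ Δ) (rTensor C R t) := by
  have h' : rTensor C R ∘ₗ lTensor C R ∘ₗ Δ = (twoOp lam R ∘ₗ Δ) ∘ₗ R := by
    rw [← LinearMap.comp_assoc, rTensor_comp_lTensor]; exact h
  have h2 := LinearMap.congr_fun (congrArg (rTensor C) h') t
  have h3 := congrArg (TensorProduct.assoc k C C C) h2
  simp only [rTensor_comp, LinearMap.comp_apply, assoc_l, assoc_r] at h3
  simp only [opA, rTensor_comp, LinearMap.comp_apply, LinearEquiv.coe_coe]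
  exact h3

theorem opB_rb (h : IsRBO lam Δ R) (t : C ⊗[k] C) :
    p2 R (p3 R (lTensor C Δ t)) = lTensor C (twoOp lam R ∘ₗ Δ) (lTensor C R t) := by
  have h' : rTensor C R ∘ₗ lTensor C R ∘ₗ Δ = (twoOp lam R ∘ₗ Δ) ∘ₗ R := by
    rw [← LinearMap.comp_assoc, rTensor_comp_lTensor]; exact h
  have h2 := LinearMap.congr_fun (congrArg (lTensor C) h') t
  simp only [lTensor_comp, LinearMap.comp_apply] at h2
  simp only [p2, p3, lTensor_comp, LinearMap.comp_apply]
  exact h2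

theorem opA_l (t : C ⊗[k] C) : opA Δ (lTensor C R t) = p3 R (opA Δ t) := by
  simp only [opA, LinearMap.comp_apply, LinearEquiv.coe_coe, ← lr_comm, assoc_3]

theorem opB_r (t : C ⊗[k] C) : lTensor C Δ (rTensor C R t) = p1 R (lTensor C Δ t) :=
  lr_comm R Δ t

theorem p12 (t : C ⊗[k] (C ⊗[k] C)) : p2 R (p1 R t) = p1 R (p2 R t) := lr_comm _ _ t
theorem p13 (t : C ⊗[k] (C ⊗[k] C)) : p3 R (p1 R t) = p1 R (p3 R t) := lr_comm _ _ t
theorem p23 (t : C ⊗[k] (C ⊗[k] C)) : p3 R (p2 R t) = p2 R (p3 R t) := by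
  simp only [p2, p3, ← LinearMap.comp_apply, ← lTensor_comp, lTensor_comp_rTensor,
    rTensor_comp_lTensor]

theorem opA_q (h : IsRBO lam Δ R) (t : C ⊗[k] C) :
    opA (twoOp lam R ∘ₗ Δ) (twoOp lam R t) = qOp lam R (opA Δ t) := by
  have e : twoOp lam R t = lTensor C R t + rTensor C R t + lam • t := rfl
  rw [e, map_add, map_add, ← opA_rb h, map_smul, opA_tilde, opA_tilde, opA_l]
  simp only [qOp, LinearMap.add_apply, LinearMap.smul_apply, LinearMap.comp_apply,
    LinearMap.id_apply]
  module

theorem opB_q (h : IsRBO lam Δ R) (t : C ⊗[k] C) :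
    lTensor C (twoOp lam R ∘ₗ Δ) (twoOp lam R t) = qOp lam R (lTensor C Δ t) := by
  have e : twoOp lam R t = lTensor C R t + rTensor C R t + lam • t := rfl
  rw [e, map_add, map_add, ← opB_rb h, map_smul, opB_tilde, opB_tilde, opB_r]
  simp only [qOp, LinearMap.add_apply, LinearMap.smul_apply, LinearMap.comp_apply,
    LinearMap.id_apply, p12, p13]
  module

theorem s_q (t : C ⊗[k] (C ⊗[k] C)) :
    lTensor C (TensorProduct.comm k C C).toLinearMap (qOp lam R t)
      = qOp lam R (lTensor C (TensorProduct.comm k C C).toLinearMap t) := by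
  have h1 : ∀ t, lTensor C (TensorProduct.comm k C C).toLinearMap (p1 R t)
      = p1 R (lTensor C (TensorProduct.comm k C C).toLinearMap t) := fun t => lr_comm _ _ t
  have h2 : ∀ t, lTensor C (TensorProduct.comm k C C).toLinearMap (p2 R t)
      = p3 R (lTensor C (TensorProduct.comm k C C).toLinearMap t) := fun t => by
    simp only [p2, p3, ← LinearMap.comp_apply, ← lTensor_comp]
    congr 2
    ext1; ext; simp
  have h3 : ∀ t, lTensor C (TensorProduct.comm k C C).toLinearMap (p3 R t)
      = p2 R (lTensor C (TensorProduct.comm k C C).toLinearMap t) := fun t => by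
    simp only [p2, p3, ← LinearMap.comp_apply, ← lTensor_comp]
    congr 2
    ext1; ext; simp
  simp only [qOp, LinearMap.add_apply, LinearMap.smul_apply, LinearMap.comp_apply,
    LinearMap.id_apply, map_add, map_smul, h1, h2, h3, p23]
  module

end Helpers

theorem stmt1 (lam : k) (Δ : C →ₗ[k] C ⊗[k] C) (R : C →ₗ[k] C)
    (hC : IsRBLC lam Δ R) :
    IsRBLC lam
      ((lTensor C R + rTensor C R + lam • (LinearMap.id : C ⊗[k] C →ₗ[k] C ⊗[k] C)) ∘ₗ Δ)
      R := by
  change IsRBLC lam (twoOp lam R ∘ₗ Δ) R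
  obtain ⟨ha, hj, hr⟩ := hC
  have e : ∀ t, twoOp lam R t = lTensor C R t + rTensor C R t + lam • t := fun _ => rfl
  refine ⟨?_, ?_, ?_⟩
  · refine LinearMap.ext fun x => ?_
    have hx : Δ x = -(TensorProduct.comm k C C (Δ x)) := LinearMap.congr_fun ha x
    have hx' : TensorProduct.comm k C C (Δ x) = -Δ x := by
      rw [eq_neg_iff_add_eq_zero, add_comm, ← eq_neg_iff_add_eq_zero]; exact hx
    simp only [LinearMap.neg_apply, LinearMap.comp_apply, LinearEquiv.coe_coe, e, map_add,
      map_smul, comm_l, comm_r, hx', map_neg]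
    module
  · refine LinearMap.ext fun x => ?_
    have hx : lTensor C Δ (Δ x) - opA Δ (Δ x)
      + lTensor C (TensorProduct.comm k C C).toLinearMap (opA Δ (Δ x)) = 0 :=
      LinearMap.congr_fun hj x
    change lTensor C (twoOp lam R ∘ₗ Δ) (twoOp lam R (Δ x))
      - opA (twoOp lam R ∘ₗ Δ) (twoOp lam R (Δ x))
      + lTensor C (TensorProduct.comm k C C).toLinearMap
        (opA (twoOp lam R ∘ₗ Δ) (twoOp lam R (Δ x))) = 0
    rw [opA_q hr, opB_q hr, s_q, ← map_sub, ← map_add, hx, map_zero]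
  · refine LinearMap.ext fun x => ?_
    have hx : TensorProduct.map R R (Δ x) = twoOp lam R (Δ (R x)) := LinearMap.congr_fun hr x
    change TensorProduct.map R R (twoOp lam R (Δ x)) = twoOp lam R (twoOp lam R (Δ (R x)))
    rw [← hx]
    simp only [e, map_lr, map_add, map_smul, lr_comm]

end
end

section
/- Let (C, Δ_C, R_C) be a λ-weighted Rota-Baxter Lie coalgebra, let (M, ρ, R_M) be a right Lie comodule of (C, Δ_C, R_C), and set Δ̃_C = (I⊗R_C + R_C⊗I + λI)Δ_C and ρ̃ = (I⊗R_C)ρ − ρR_M. Then (M, ρ̃, R_M) is a right Lie comodule of the λ-weighted Rota-Baxter Lie coalgebra (C, Δ̃_C, R_C): (I⊗Δ̃_C)ρ̃ − (ρ̃⊗I)ρ̃ + (I⊗τ)(ρ̃⊗I)ρ̃ = 0 and (R_M⊗R_C)ρ̃ = (R_M⊗I + I⊗R_C + λI)ρ̃R_M. -/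
/-!
STATEMENT 2: If `(M, ρ, R_M)` is a right Lie comodule of the `λ`-weighted Rota-Baxter
Lie coalgebra `(C, Δ_C, R_C)`, then `(M, ρ̃, R_M)` with `ρ̃ = (I⊗R_C)ρ - ρR_M` is a right
Lie comodule of `(C, Δ̃_C, R_C)`, where `Δ̃_C = (I⊗R_C + R_C⊗I + λI)Δ_C`.
-/

open TensorProduct LinearMap

section

variable {k : Type*} [Field k]
variable {C : Type*} [AddCommGroup C] [Module k C]
variable {M : Type*} [AddCommGroup M] [Module k M]

/-- Right Lie comodule condition `(I⊗Δ)ρ - (ρ⊗I)ρ + (I⊗τ)(ρ⊗I)ρ = 0`. -/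
def IsCoMod (Δ : C →ₗ[k] C ⊗[k] C) (ρ : M →ₗ[k] M ⊗[k] C) : Prop :=
  lTensor M Δ ∘ₗ ρ
    - (TensorProduct.assoc k M C C).toLinearMap ∘ₗ rTensor C ρ ∘ₗ ρ
    + lTensor M (TensorProduct.comm k C C).toLinearMap ∘ₗ
        (TensorProduct.assoc k M C C).toLinearMap ∘ₗ rTensor C ρ ∘ₗ ρ = 0

/-- `(R_M⊗R_C)ρ = (R_M⊗I + I⊗R_C + λI)ρR_M`. -/
def IsRBCoModMap (lam : k) (ρ : M →ₗ[k] M ⊗[k] C) (RC : C →ₗ[k] C) (RM : M →ₗ[k] M) : Prop :=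
  TensorProduct.map RM RC ∘ₗ ρ
    = (rTensor C RM + lTensor M RC +
        lam • (LinearMap.id : M ⊗[k] C →ₗ[k] M ⊗[k] C)) ∘ₗ ρ ∘ₗ RM

theorem stmt2 (lam : k) (Δ : C →ₗ[k] C ⊗[k] C) (RC : C →ₗ[k] C)
    (ρ : M →ₗ[k] M ⊗[k] C) (RM : M →ₗ[k] M)
    (hC : IsRBLC lam Δ RC) (hM : IsCoMod Δ ρ ∧ IsRBCoModMap lam ρ RC RM) :
    IsCoMod ((lTensor C RC + rTensor C RC
        + lam • (LinearMap.id : C ⊗[k] C →ₗ[k] C ⊗[k] C)) ∘ₗ Δ)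
      (lTensor M RC ∘ₗ ρ - ρ ∘ₗ RM) ∧
    IsRBCoModMap lam (lTensor M RC ∘ₗ ρ - ρ ∘ₗ RM) RC RM := by
  obtain ⟨-, -, hR⟩ := hC
  obtain ⟨hm, hP⟩ := hM
  unfold IsRBO at hR
  unfold IsCoMod at hm
  unfold IsRBCoModMap at hP
  have hmap : ∀ x : M ⊗[k] C, TensorProduct.map RM RC x = lTensor M RC (rTensor C RM x) := by
    intro x
    rw [← LinearMap.comp_apply, LinearMap.lTensor_comp_rTensor]
  have hcomm : ∀ x : M ⊗[k] C,
      rTensor C RM (lTensor M RC x) = lTensor M RC (rTensor C RM x) := by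
    intro x
    rw [← LinearMap.comp_apply, ← LinearMap.comp_apply, LinearMap.lTensor_comp_rTensor,
      LinearMap.rTensor_comp_lTensor]
  have hP' : ∀ m, lTensor M RC (rTensor C RM (ρ m))
      = rTensor C RM (ρ (RM m)) + lTensor M RC (ρ (RM m)) + lam • ρ (RM m) := by
    intro m
    rw [← hmap]
    simpa using LinearMap.congr_fun hP m
  constructor
  · unfold IsCoMod
    -- the operators on `M ⊗ (C ⊗ C)`
    obtain ⟨R2, hR2⟩ : ∃ f, f = lTensor M (rTensor C RC) := ⟨_, rfl⟩
    obtain ⟨R3, hR3⟩ : ∃ f, f = lTensor M (lTensor C RC) := ⟨_, rfl⟩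
    obtain ⟨D, hD⟩ : ∃ f, f = lTensor M Δ := ⟨_, rfl⟩
    obtain ⟨T, hT⟩ : ∃ f, f = lTensor M (TensorProduct.comm k C C).toLinearMap := ⟨_, rfl⟩
    obtain ⟨E, hE⟩ : ∃ f, f = (TensorProduct.assoc k M C C).toLinearMap ∘ₗ rTensor C ρ :=
      ⟨_, rfl⟩
    have h1 : lTensor M ((lTensor C RC + rTensor C RC
        + lam • (LinearMap.id : C ⊗[k] C →ₗ[k] C ⊗[k] C)) ∘ₗ Δ)
        = (R3 + R2 + lam • LinearMap.id) ∘ₗ D := by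
      rw [hR2, hR3, hD, LinearMap.lTensor_comp, LinearMap.lTensor_add, LinearMap.lTensor_add,
        LinearMap.lTensor_smul, LinearMap.lTensor_id]
    have h2 : (R3 + R2 + lam • LinearMap.id) ∘ₗ D ∘ₗ lTensor M RC = R2 ∘ₗ R3 ∘ₗ D := by
      have h := congrArg (lTensor M) hR
      rw [← LinearMap.rTensor_comp_lTensor] at h
      simp only [LinearMap.lTensor_comp, LinearMap.lTensor_add, LinearMap.lTensor_smul,
        LinearMap.lTensor_id] at h
      rw [hR2, hR3, hD, ← h]
      rfl
    have hassoc : ∀ z : (M ⊗[k] C) ⊗[k] C, TensorProduct.assoc k M C C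
        (rTensor C (lTensor M RC) z) = R2 (TensorProduct.assoc k M C C z) := by
      intro z
      rw [hR2, ← LinearEquiv.coe_coe, ← LinearMap.comp_apply, ← LinearMap.comp_apply]
      refine LinearMap.congr_fun (TensorProduct.ext_threefold fun x y z => ?_) z
      simp
    have h3 : (TensorProduct.assoc k M C C).toLinearMap ∘ₗ
        rTensor C (lTensor M RC ∘ₗ ρ - ρ ∘ₗ RM) = R2 ∘ₗ E - E ∘ₗ rTensor C RM := by
      rw [LinearMap.rTensor_sub, LinearMap.rTensor_comp, LinearMap.rTensor_comp, hE]
      ext y c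
      have := hassoc (ρ y ⊗ₜ c)
      rw [LinearMap.rTensor_tmul] at this
      simp [this]
    have h4 : ∀ x, E (lTensor M RC x) = R3 (E x) := by
      intro x
      rw [hE, hR3]
      induction x with
      | zero => simp
      | add x y hx hy => simp only [map_add, hx, hy]
      | tmul x y =>
        simp only [LinearMap.comp_apply, LinearMap.lTensor_tmul, LinearMap.rTensor_tmul]
        generalize ρ x = w
        induction w with
        | zero => simp
        | add x y hx hy => simp only [add_tmul, map_add, hx, hy]
        | tmul a b => simp
    have h5 : ∀ x, T (R2 x) = R3 (T x) := by
      intro x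
      rw [hT, hR2, hR3, ← LinearMap.comp_apply, ← LinearMap.comp_apply, ← LinearMap.lTensor_comp,
        ← LinearMap.lTensor_comp]
      congr 2
      ext a b
      simp
    have h6 : ∀ x, T (R3 x) = R2 (T x) := by
      intro x
      rw [hT, hR2, hR3, ← LinearMap.comp_apply, ← LinearMap.comp_apply, ← LinearMap.lTensor_comp,
        ← LinearMap.lTensor_comp]
      congr 2
      ext a b
      simp
    have h7 : ∀ x, R3 (R2 x) = R2 (R3 x) := by
      intro x
      rw [hR2, hR3, ← LinearMap.comp_apply, ← LinearMap.comp_apply, ← LinearMap.lTensor_comp,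
        ← LinearMap.lTensor_comp, LinearMap.lTensor_comp_rTensor, LinearMap.rTensor_comp_lTensor]
    have hm' : ∀ m, D (ρ m) - E (ρ m) + T (E (ρ m)) = 0 := by
      intro m
      rw [hD, hE, hT]
      simpa using LinearMap.congr_fun hm m
    -- the two sides of the deformed identity
    have hDt : ∀ m, R3 (D (lTensor M RC (ρ m) - ρ (RM m))) + R2 (D (lTensor M RC (ρ m) - ρ (RM m)))
          + lam • D (lTensor M RC (ρ m) - ρ (RM m))
        = R2 (R3 (D (ρ m))) - (R3 (D (ρ (RM m))) + R2 (D (ρ (RM m))) + lam • D (ρ (RM m))) := by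
      intro m
      have := LinearMap.congr_fun h2 (ρ m)
      simp only [LinearMap.comp_apply, LinearMap.add_apply, LinearMap.smul_apply,
        LinearMap.id_apply] at this
      rw [← this]
      simp only [map_sub, smul_sub]
      abel
    have hEt : ∀ m, R2 (E (lTensor M RC (ρ m) - ρ (RM m)))
          - E (rTensor C RM (lTensor M RC (ρ m) - ρ (RM m)))
        = R2 (R3 (E (ρ m))) - (R3 (E (ρ (RM m))) + R2 (E (ρ (RM m))) + lam • E (ρ (RM m))) := by
      intro m
      simp only [map_sub, hcomm, hP', map_add, map_smul, h4]
      abel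
    rw [h1, ← LinearMap.comp_assoc _ (rTensor C _), h3, ← hT]
    ext m
    simp only [LinearMap.add_apply, LinearMap.sub_apply, LinearMap.comp_apply,
      LinearMap.zero_apply, LinearMap.smul_apply, LinearMap.id_apply]
    rw [hDt, hEt]
    have e1 := congrArg (fun x => R2 (R3 x)) (hm' m)
    have e2 := congrArg (fun x => R3 x + R2 x + lam • x) (hm' (RM m))
    simp only [map_add, map_sub, map_smul, smul_add, smul_sub, map_zero, smul_zero, h5, h6, h7]
      at e1 e2 ⊢
    rw [add_zero, add_zero] at e2
    refine Eq.trans ?_ ((congrArg₂ (fun x y => x - y) e1 e2).trans (sub_zero 0))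
    beta_reduce
    abel
  · unfold IsRBCoModMap
    ext m
    simp only [LinearMap.add_apply, LinearMap.sub_apply, LinearMap.comp_apply,
      LinearMap.smul_apply, LinearMap.id_apply, hmap, map_sub, hcomm, hP', map_add, map_smul]

end
end

section
/- Let (C, Δ_C, R_C) and (M, Δ_M, R_M) be λ-weighted Rota-Baxter Lie coalgebras, and let h : M → C⊗C, ρ : M → M⊗C, φ : M → C be linear maps. Define Δ_{(h,ρ)} : C⊕M → (C⊕M)⊗(C⊕M) by Δ_{(h,ρ)}(c+m) = Δ_C(c) + h(m) + Δ_M(m) + ρ(m) − τρ(m) and R_φ : C⊕M → C⊕M by R_φ(c+m) = R_C(c) + R_M(m) + φ(m). Then (C⊕M, Δ_{(h,ρ)}, R_φ) is a λ-weighted Rota-Baxter Lie coalgebra if and only if (h, ρ, φ) is a non-abelian 2-cocycle on (C, Δ_C, R_C) with values in (M, Δ_M, R_M). -/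
open TensorProduct LinearMap

section

variable {k : Type*} [Field k]
variable {C : Type*} [AddCommGroup C] [Module k C]
variable {M : Type*} [AddCommGroup M] [Module k M]
variable {E : Type*} [AddCommGroup E] [Module k E]

/-- Homomorphism of `λ`-weighted Rota-Baxter Lie coalgebras:
`(θ⊗θ)Δ_C = Δ_E θ` and `R_E θ = θ R_C`. -/
def IsHom (ΔC : C →ₗ[k] C ⊗[k] C) (RC : C →ₗ[k] C)
    (ΔE : E →ₗ[k] E ⊗[k] E) (RE : E →ₗ[k] E) (θ : C →ₗ[k] E) : Prop :=
  TensorProduct.map θ θ ∘ₗ ΔC = ΔE ∘ₗ θ ∧ RE ∘ₗ θ = θ ∘ₗ RC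

/-- Non-abelian 2-cocycle `(h, ρ, φ)` on `(C, Δ_C, R_C)` with values in `(M, Δ_M, R_M)`. -/
def NA2Cocycle (lam : k) (ΔC : C →ₗ[k] C ⊗[k] C) (RC : C →ₗ[k] C)
    (ΔM : M →ₗ[k] M ⊗[k] M) (RM : M →ₗ[k] M)
    (h : M →ₗ[k] C ⊗[k] C) (ρ : M →ₗ[k] M ⊗[k] C) (φ : M →ₗ[k] C) : Prop :=
  -- (1)  τh + h = 0
  ((TensorProduct.comm k C C).toLinearMap ∘ₗ h + h = 0) ∧
  -- (2)  (I⊗Δ_C)h − (Δ_C⊗I)h + (I⊗τ)(Δ_C⊗I)h = (h⊗I)ρ + (I⊗h)τρ − (I⊗τ)(h⊗I)ρ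
  (lTensor C ΔC ∘ₗ h
      - (TensorProduct.assoc k C C C).toLinearMap ∘ₗ rTensor C ΔC ∘ₗ h
      + lTensor C (TensorProduct.comm k C C).toLinearMap ∘ₗ
          (TensorProduct.assoc k C C C).toLinearMap ∘ₗ rTensor C ΔC ∘ₗ h
    = (TensorProduct.assoc k C C C).toLinearMap ∘ₗ
        TensorProduct.map h (LinearMap.id : C →ₗ[k] C) ∘ₗ ρ
      + lTensor C h ∘ₗ (TensorProduct.comm k M C).toLinearMap ∘ₗ ρ
      - lTensor C (TensorProduct.comm k C C).toLinearMap ∘ₗ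
          (TensorProduct.assoc k C C C).toLinearMap ∘ₗ
          TensorProduct.map h (LinearMap.id : C →ₗ[k] C) ∘ₗ ρ) ∧
  -- (3)  (I⊗Δ_C)ρ + (I⊗h)Δ_M = (ρ⊗I)ρ − (I⊗τ)(ρ⊗I)ρ
  (lTensor M ΔC ∘ₗ ρ + lTensor M h ∘ₗ ΔM
    = (TensorProduct.assoc k M C C).toLinearMap ∘ₗ rTensor C ρ ∘ₗ ρ
      - lTensor M (TensorProduct.comm k C C).toLinearMap ∘ₗ
          (TensorProduct.assoc k M C C).toLinearMap ∘ₗ rTensor C ρ ∘ₗ ρ) ∧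
  -- (4)  (Δ_M⊗I)ρ = (I⊗τ)(ρ⊗I)Δ_M + (I⊗ρ)Δ_M
  ((TensorProduct.assoc k M M C).toLinearMap ∘ₗ rTensor C ΔM ∘ₗ ρ
    = lTensor M (TensorProduct.comm k C M).toLinearMap ∘ₗ
        (TensorProduct.assoc k M C M).toLinearMap ∘ₗ rTensor M ρ ∘ₗ ΔM
      + lTensor M ρ ∘ₗ ΔM) ∧
  -- (5)
  (TensorProduct.map φ RC ∘ₗ ρ
      - TensorProduct.map RC φ ∘ₗ (TensorProduct.comm k M C).toLinearMap ∘ₗ ρ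
      - TensorProduct.map φ (LinearMap.id : C →ₗ[k] C) ∘ₗ ρ ∘ₗ RM
      + lTensor C φ ∘ₗ (TensorProduct.comm k M C).toLinearMap ∘ₗ ρ ∘ₗ RM
      + TensorProduct.map φ φ ∘ₗ ΔM
      - (lTensor C RC + rTensor C RC
          + lam • (LinearMap.id : C ⊗[k] C →ₗ[k] C ⊗[k] C)) ∘ₗ ΔC ∘ₗ φ
    = (rTensor C RC + lTensor C RC
        + lam • (LinearMap.id : C ⊗[k] C →ₗ[k] C ⊗[k] C)) ∘ₗ h ∘ₗ RM
      - TensorProduct.map RC RC ∘ₗ h) ∧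
  -- (6)  (R_M⊗φ)Δ_M + (R_M⊗R_C)ρ = (I⊗φ)Δ_M R_M + (I⊗R_C + R_M⊗I + λ)ρR_M
  (TensorProduct.map RM φ ∘ₗ ΔM + TensorProduct.map RM RC ∘ₗ ρ
    = lTensor M φ ∘ₗ ΔM ∘ₗ RM
      + (lTensor M RC + rTensor C RM
          + lam • (LinearMap.id : M ⊗[k] C →ₗ[k] M ⊗[k] C)) ∘ₗ ρ ∘ₗ RM)

/-- The cobracket `Δ_{(h,ρ)}` on `C ⊕ M`. -/
noncomputable def prodCobra (ΔC : C →ₗ[k] C ⊗[k] C) (ΔM : M →ₗ[k] M ⊗[k] M)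
    (h : M →ₗ[k] C ⊗[k] C) (ρ : M →ₗ[k] M ⊗[k] C) :
    (C × M) →ₗ[k] (C × M) ⊗[k] (C × M) :=
  TensorProduct.map (LinearMap.inl k C M) (LinearMap.inl k C M) ∘ₗ
      (ΔC ∘ₗ LinearMap.fst k C M + h ∘ₗ LinearMap.snd k C M)
    + TensorProduct.map (LinearMap.inr k C M) (LinearMap.inr k C M) ∘ₗ ΔM ∘ₗ LinearMap.snd k C M
    + TensorProduct.map (LinearMap.inr k C M) (LinearMap.inl k C M) ∘ₗ ρ ∘ₗ LinearMap.snd k C M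
    - TensorProduct.map (LinearMap.inl k C M) (LinearMap.inr k C M) ∘ₗ
        (TensorProduct.comm k M C).toLinearMap ∘ₗ ρ ∘ₗ LinearMap.snd k C M

/-- The operator `R_φ` on `C ⊕ M`. -/
def prodRB (RC : C →ₗ[k] C) (RM : M →ₗ[k] M) (φ : M →ₗ[k] C) :
    (C × M) →ₗ[k] (C × M) :=
  LinearMap.inl k C M ∘ₗ (RC ∘ₗ LinearMap.fst k C M + φ ∘ₗ LinearMap.snd k C M)
    + LinearMap.inr k C M ∘ₗ RM ∘ₗ LinearMap.snd k C M

/-- `(α,β)` is extensible with respect to the non-abelian extension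
`0 → C →f E →g M → 0`. -/
def Extensible (ΔE : E →ₗ[k] E ⊗[k] E) (RE : E →ₗ[k] E)
    (f : C →ₗ[k] E) (g : E →ₗ[k] M) (α : C →ₗ[k] C) (β : M →ₗ[k] M) : Prop :=
  ∃ γ : E →ₗ[k] E, IsHom ΔE RE ΔE RE γ ∧ Function.Bijective γ ∧
    Submodule.map γ (LinearMap.range f) = LinearMap.range f ∧
    γ ∘ₗ f = f ∘ₗ α ∧ g ∘ₗ γ = β ∘ₗ g

/-- `(h', ρ', φ')` differs from `(h, ρ, φ)` by the equivalence move associated to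
the linear map `s : M → C`. -/
def EquivVia (ΔC : C →ₗ[k] C ⊗[k] C) (RC : C →ₗ[k] C)
    (ΔM : M →ₗ[k] M ⊗[k] M) (RM : M →ₗ[k] M) (s : M →ₗ[k] C)
    (h : M →ₗ[k] C ⊗[k] C) (ρ : M →ₗ[k] M ⊗[k] C) (φ : M →ₗ[k] C)
    (h' : M →ₗ[k] C ⊗[k] C) (ρ' : M →ₗ[k] M ⊗[k] C) (φ' : M →ₗ[k] C) : Prop :=
  h' - h = TensorProduct.map s (LinearMap.id : C →ₗ[k] C) ∘ₗ ρ
      - (TensorProduct.comm k C C).toLinearMap ∘ₗ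
          TensorProduct.map s (LinearMap.id : C →ₗ[k] C) ∘ₗ ρ
      + TensorProduct.map s s ∘ₗ ΔM - ΔC ∘ₗ s ∧
  ρ' - ρ = lTensor M s ∘ₗ ΔM ∧
  φ' - φ = s ∘ₗ RM - RC ∘ₗ s

/-- Two non-abelian 2-cocycles are equivalent. -/
def CocEquiv (ΔC : C →ₗ[k] C ⊗[k] C) (RC : C →ₗ[k] C)
    (ΔM : M →ₗ[k] M ⊗[k] M) (RM : M →ₗ[k] M)
    (h : M →ₗ[k] C ⊗[k] C) (ρ : M →ₗ[k] M ⊗[k] C) (φ : M →ₗ[k] C)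
    (h' : M →ₗ[k] C ⊗[k] C) (ρ' : M →ₗ[k] M ⊗[k] C) (φ' : M →ₗ[k] C) : Prop :=
  ∃ s : M →ₗ[k] C, EquivVia ΔC RC ΔM RM s h ρ φ h' ρ' φ'


section helpers

set_option linter.unusedSimpArgs false

variable {A B D G A' B' D' G' : Type*} [AddCommGroup A] [Module k A] [AddCommGroup B] [Module k B]
  [AddCommGroup D] [Module k D] [AddCommGroup G] [Module k G]
  [AddCommGroup A'] [Module k A'] [AddCommGroup B'] [Module k B']
  [AddCommGroup D'] [Module k D'] [AddCommGroup G'] [Module k G']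

/-- Cyclic rotation of a triple tensor. -/
noncomputable def cycT (t : A ⊗[k] (B ⊗[k] D)) : D ⊗[k] (A ⊗[k] B) :=
  TensorProduct.comm k _ _ ((TensorProduct.assoc k A B D).symm t)

theorem cycT_add (s t : A ⊗[k] (B ⊗[k] D)) : cycT (s + t) = cycT s + cycT t := by
  simp [cycT]

theorem cyc_assoc (f : A →ₗ[k] B ⊗[k] D) (t : A ⊗[k] G) :
    cycT (TensorProduct.assoc k B D G (rTensor G f t)) = lTensor G f (TensorProduct.comm k A G t) := by
  simp only [cycT]
  induction t with
  | zero => simp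
  | add x y hx hy => simp only [map_add, hx, hy]
  | tmul a g => simp

theorem cyc_comm_assoc (f : A →ₗ[k] B ⊗[k] D) (t : A ⊗[k] G) :
    cycT (lTensor B (TensorProduct.comm k D G).toLinearMap
      (TensorProduct.assoc k B D G (rTensor G f t))) =
    TensorProduct.assoc k D B G (rTensor G ((TensorProduct.comm k B D).toLinearMap ∘ₗ f) t) := by
  simp only [cycT]
  induction t with
  | zero => simp
  | add x y hx hy => simp only [map_add, hx, hy]
  | tmul a g =>
    simp only [rTensor_tmul, LinearMap.comp_apply]
    generalize f a = s
    induction s with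
    | zero => simp
    | add x y hx hy => simp only [map_add, TensorProduct.add_tmul, hx, hy]
    | tmul b d => simp

theorem cyc_lTensor (f : A →ₗ[k] B ⊗[k] D) (t : G ⊗[k] A) :
    cycT (lTensor G f t) =
    lTensor D (TensorProduct.comm k B G).toLinearMap (TensorProduct.assoc k D B G
      (rTensor G ((TensorProduct.comm k B D).toLinearMap ∘ₗ f) (TensorProduct.comm k G A t))) := by
  simp only [cycT]
  induction t with
  | zero => simp
  | add x y hx hy => simp only [map_add, hx, hy]
  | tmul a g =>
    simp only [lTensor_tmul, rTensor_tmul, TensorProduct.comm_tmul, LinearMap.comp_apply]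
    generalize f g = s
    induction s with
    | zero => simp
    | add x y hx hy => simp only [map_add, TensorProduct.add_tmul, TensorProduct.tmul_add, hx, hy]
    | tmul b d => simp

theorem lc_assoc (f : A →ₗ[k] B ⊗[k] D) (t : A ⊗[k] G) :
    TensorProduct.leftComm k B D G (TensorProduct.assoc k B D G (rTensor G f t)) =
    TensorProduct.assoc k D B G (rTensor G ((TensorProduct.comm k B D).toLinearMap ∘ₗ f) t) := by
  induction t with
  | zero => simp
  | add x y hx hy => simp only [map_add, hx, hy]
  | tmul a g =>
    simp only [rTensor_tmul, LinearMap.comp_apply]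
    generalize f a = s
    induction s with
    | zero => simp
    | add x y hx hy => simp only [map_add, TensorProduct.add_tmul, hx, hy]
    | tmul b d => simp

theorem lc_comm_assoc (f : A →ₗ[k] B ⊗[k] D) (t : A ⊗[k] G) :
    TensorProduct.leftComm k B G D (lTensor B (TensorProduct.comm k D G).toLinearMap
      (TensorProduct.assoc k B D G (rTensor G f t))) =
    lTensor G f (TensorProduct.comm k A G t) := by
  induction t with
  | zero => simp
  | add x y hx hy => simp only [map_add, hx, hy]
  | tmul a g =>
    simp only [rTensor_tmul, lTensor_tmul, TensorProduct.comm_tmul]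
    generalize f a = s
    induction s with
    | zero => simp
    | add x y hx hy => simp only [map_add, TensorProduct.add_tmul, TensorProduct.tmul_add, hx, hy]
    | tmul b d => simp

theorem lc_lTensor (f : A →ₗ[k] B ⊗[k] D) (t : G ⊗[k] A) :
    TensorProduct.leftComm k G B D (lTensor G f t) =
    lTensor B (TensorProduct.comm k D G).toLinearMap (TensorProduct.assoc k B D G
      (rTensor G f (TensorProduct.comm k G A t))) := by
  induction t with
  | zero => simp
  | add x y hx hy => simp only [map_add, hx, hy]
  | tmul a g =>
    simp only [lTensor_tmul, rTensor_tmul, TensorProduct.comm_tmul]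
    generalize f g = s
    induction s with
    | zero => simp
    | add x y hx hy => simp only [map_add, TensorProduct.add_tmul, TensorProduct.tmul_add, hx, hy]
    | tmul b d => simp

theorem lcomm_lcomm (t : A ⊗[k] (B ⊗[k] D)) :
    lTensor A (TensorProduct.comm k D B).toLinearMap
      (lTensor A (TensorProduct.comm k B D).toLinearMap t) = t := by
  rw [← LinearMap.comp_apply, ← lTensor_comp]
  have : (TensorProduct.comm k D B).toLinearMap ∘ₗ (TensorProduct.comm k B D).toLinearMap
      = LinearMap.id := by ext; simp
  rw [this]; simp

theorem lcomm_lTensor (f : G →ₗ[k] B ⊗[k] D) (t : A ⊗[k] G) :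
    lTensor A (TensorProduct.comm k B D).toLinearMap (lTensor A f t)
     = lTensor A ((TensorProduct.comm k B D).toLinearMap ∘ₗ f) t := by
  rw [← LinearMap.comp_apply, ← lTensor_comp]

/-- naturality of the flip in the last two factors -/
theorem lcomm_map (f : A →ₗ[k] A') (g : B →ₗ[k] B') (h : D →ₗ[k] D') (t : A ⊗[k] (B ⊗[k] D)) :
    lTensor A' (TensorProduct.comm k B' D').toLinearMap
      (TensorProduct.map f (TensorProduct.map g h) t) =
    TensorProduct.map f (TensorProduct.map h g)
      (lTensor A (TensorProduct.comm k B D).toLinearMap t) := by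
  have : lTensor A' (TensorProduct.comm k B' D').toLinearMap ∘ₗ
      (TensorProduct.map f (TensorProduct.map g h)) =
    TensorProduct.map f (TensorProduct.map h g) ∘ₗ
      (lTensor A (TensorProduct.comm k B D).toLinearMap) := by
    ext; simp
  exact LinearMap.congr_fun this t

theorem comm_map' (f : A →ₗ[k] A') (g : B →ₗ[k] B') (t : A ⊗[k] B) :
    TensorProduct.comm k A' B' (TensorProduct.map f g t) =
      TensorProduct.map g f (TensorProduct.comm k A B t) := by
  have : (TensorProduct.comm k A' B').toLinearMap ∘ₗ TensorProduct.map f g =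
      TensorProduct.map g f ∘ₗ (TensorProduct.comm k A B).toLinearMap := by
    ext; simp
  exact LinearMap.congr_fun this t

theorem assoc_map_comp (f : A →ₗ[k] A') (g : B →ₗ[k] B') (h : D →ₗ[k] D')
    (X : G →ₗ[k] A ⊗[k] B) (t : G ⊗[k] D) :
    TensorProduct.assoc k A' B' D' (TensorProduct.map (TensorProduct.map f g ∘ₗ X) h t) =
    TensorProduct.map f (TensorProduct.map g h) (TensorProduct.assoc k A B D (rTensor D X t)) := by
  have h1 : TensorProduct.map (TensorProduct.map f g ∘ₗ X) h =
      TensorProduct.map (TensorProduct.map f g) h ∘ₗ rTensor D X := by ext; simp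
  have h2 : (TensorProduct.assoc k A' B' D').toLinearMap ∘ₗ
      TensorProduct.map (TensorProduct.map f g) h =
      TensorProduct.map f (TensorProduct.map g h) ∘ₗ (TensorProduct.assoc k A B D).toLinearMap := by
    ext; simp
  rw [h1]
  exact LinearMap.congr_fun h2 (rTensor D X t)

theorem map_comp_l (f : A →ₗ[k] A') (g : B →ₗ[k] B') (X : G →ₗ[k] B) (t : A ⊗[k] G) :
    TensorProduct.map f (g ∘ₗ X) t = TensorProduct.map f g (lTensor A X t) := by
  have h1 : TensorProduct.map f (g ∘ₗ X) = TensorProduct.map f g ∘ₗ lTensor A X := by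
    ext; simp
  rw [h1]; rfl

theorem map_comp_r (f : A →ₗ[k] A') (g : B →ₗ[k] B') (X : G →ₗ[k] A) (t : G ⊗[k] B) :
    TensorProduct.map (f ∘ₗ X) g t = TensorProduct.map f g (rTensor B X t) := by
  have h1 : TensorProduct.map (f ∘ₗ X) g = TensorProduct.map f g ∘ₗ rTensor B X := by
    ext; simp
  rw [h1]; rfl

theorem map_comp_b (f : A →ₗ[k] A') (g : B →ₗ[k] B') (X : G →ₗ[k] A) (Y : D →ₗ[k] B)
    (t : G ⊗[k] D) :
    TensorProduct.map (f ∘ₗ X) (g ∘ₗ Y) t = TensorProduct.map f g (TensorProduct.map X Y t) := by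
  rw [TensorProduct.map_comp]; rfl

theorem map_add_r (f : A →ₗ[k] A') (g h : B →ₗ[k] B') (t : A ⊗[k] B) :
    TensorProduct.map f (g + h) t = TensorProduct.map f g t + TensorProduct.map f h t := by
  rw [TensorProduct.map_add_right]; rfl
theorem map_add_l (f : B →ₗ[k] B') (g h : A →ₗ[k] A') (t : A ⊗[k] B) :
    TensorProduct.map (g + h) f t = TensorProduct.map g f t + TensorProduct.map h f t := by
  rw [TensorProduct.map_add_left]; rfl
theorem map_sub_r (f : A →ₗ[k] A') (g h : B →ₗ[k] B') (t : A ⊗[k] B) :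
    TensorProduct.map f (g - h) t = TensorProduct.map f g t - TensorProduct.map f h t := by
  rw [eq_sub_iff_add_eq, ← map_add_r, sub_add_cancel]
theorem map_sub_l (f : B →ₗ[k] B') (g h : A →ₗ[k] A') (t : A ⊗[k] B) :
    TensorProduct.map (g - h) f t = TensorProduct.map g f t - TensorProduct.map h f t := by
  rw [eq_sub_iff_add_eq, ← map_add_l, sub_add_cancel]

theorem lT_map (X : B' →ₗ[k] D) (f : A →ₗ[k] A') (g : B →ₗ[k] B') (t : A ⊗[k] B) :
    lTensor A' X (TensorProduct.map f g t) = TensorProduct.map f (X ∘ₗ g) t := by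
  rw [← LinearMap.comp_apply, lTensor_comp_map]
theorem rT_map (X : A' →ₗ[k] D) (f : A →ₗ[k] A') (g : B →ₗ[k] B') (t : A ⊗[k] B) :
    rTensor B' X (TensorProduct.map f g t) = TensorProduct.map (X ∘ₗ f) g t := by
  rw [← LinearMap.comp_apply, rTensor_comp_map]
theorem map_map' (f : A →ₗ[k] A') (g : B →ₗ[k] B') (f' : A' →ₗ[k] D) (g' : B' →ₗ[k] G)
    (t : A ⊗[k] B) : TensorProduct.map f' g' (TensorProduct.map f g t)
      = TensorProduct.map (f' ∘ₗ f) (g' ∘ₗ g) t := by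
  rw [TensorProduct.map_comp]; rfl

theorem prodCobra_inl (ΔC : C →ₗ[k] C ⊗[k] C) (ΔM : M →ₗ[k] M ⊗[k] M)
    (h : M →ₗ[k] C ⊗[k] C) (ρ : M →ₗ[k] M ⊗[k] C) :
    prodCobra ΔC ΔM h ρ ∘ₗ inl k C M = TensorProduct.map (inl k C M) (inl k C M) ∘ₗ ΔC := by
  ext c; simp [prodCobra]

theorem prodCobra_inr (ΔC : C →ₗ[k] C ⊗[k] C) (ΔM : M →ₗ[k] M ⊗[k] M)
    (h : M →ₗ[k] C ⊗[k] C) (ρ : M →ₗ[k] M ⊗[k] C) :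
    prodCobra ΔC ΔM h ρ ∘ₗ inr k C M = TensorProduct.map (inl k C M) (inl k C M) ∘ₗ h
     + TensorProduct.map (inr k C M) (inr k C M) ∘ₗ ΔM
     + TensorProduct.map (inr k C M) (inl k C M) ∘ₗ ρ
     - TensorProduct.map (inl k C M) (inr k C M) ∘ₗ (TensorProduct.comm k M C).toLinearMap ∘ₗ ρ := by
  ext c; simp [prodCobra]

theorem prodRB_inl (RC : C →ₗ[k] C) (RM : M →ₗ[k] M) (φ : M →ₗ[k] C) :
    prodRB RC RM φ ∘ₗ inl k C M = inl k C M ∘ₗ RC := by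
  ext c <;> simp [prodRB]

theorem prodRB_inr (RC : C →ₗ[k] C) (RM : M →ₗ[k] M) (φ : M →ₗ[k] C) :
    prodRB RC RM φ ∘ₗ inr k C M = inl k C M ∘ₗ φ + inr k C M ∘ₗ RM := by
  ext c <;> simp [prodRB]

theorem snd_inl' : (snd k C M) ∘ₗ (inl k C M) = 0 := by ext; simp
theorem fst_inr' : (fst k C M) ∘ₗ (inr k C M) = 0 := by ext; simp

theorem anti_iff (ΔC : C →ₗ[k] C ⊗[k] C) (ΔM : M →ₗ[k] M ⊗[k] M)
    (h : M →ₗ[k] C ⊗[k] C) (ρ : M →ₗ[k] M ⊗[k] C) (hC : CoAnti ΔC) (hM : CoAnti ΔM) :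
    CoAnti (prodCobra ΔC ΔM h ρ) ↔ (TensorProduct.comm k C C).toLinearMap ∘ₗ h + h = 0 := by
  have i1 := LinearMap.congr_fun (prodCobra_inl ΔC ΔM h ρ)
  have i2 := LinearMap.congr_fun (prodCobra_inr ΔC ΔM h ρ)
  simp only [LinearMap.comp_apply, LinearMap.add_apply, LinearMap.sub_apply,
    LinearEquiv.coe_coe] at i1 i2
  constructor
  · intro H
    ext1 m
    have := LinearMap.congr_fun H (inr k C M m)
    have := congrArg (TensorProduct.map (fst k C M) (fst k C M)) this
    simp only [LinearMap.neg_apply, LinearMap.comp_apply, LinearEquiv.coe_coe, i2, map_add, map_sub,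
      map_neg, comm_map', map_map', fst_comp_inl, fst_inr', TensorProduct.map_zero_left,
      TensorProduct.map_zero_right, LinearMap.zero_apply, TensorProduct.map_id, LinearMap.id_apply] at this
    simp only [LinearMap.add_apply, LinearMap.comp_apply, LinearEquiv.coe_coe, LinearMap.zero_apply]
    linear_combination (norm := module) this
  · intro H
    apply LinearMap.prod_ext
    · ext1 c
      have := congrArg (TensorProduct.map (inl k C M) (inl k C M)) (LinearMap.congr_fun hC c)
      simp only [LinearMap.neg_apply, LinearMap.comp_apply, LinearEquiv.coe_coe, i1, map_neg,
        comm_map'] at this ⊢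
      exact this
    · ext1 m
      have h1 := congrArg (TensorProduct.map (inl k C M) (inl k C M)) (LinearMap.congr_fun H m)
      have h2 := congrArg (TensorProduct.map (inr k C M) (inr k C M)) (LinearMap.congr_fun hM m)
      have h3 : TensorProduct.comm k C M (TensorProduct.comm k M C (ρ m)) = ρ m := by
        simp
      simp only [LinearMap.neg_apply, LinearMap.add_apply, LinearMap.zero_apply,
        LinearMap.comp_apply, LinearEquiv.coe_coe, i2, map_neg, map_zero,
        map_add, map_sub, comm_map', h3] at h1 h2 ⊢
      linear_combination (norm := module) h1 + h2

theorem rbo_iff (lam : k) (ΔC : C →ₗ[k] C ⊗[k] C) (ΔM : M →ₗ[k] M ⊗[k] M)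
    (RC : C →ₗ[k] C) (RM : M →ₗ[k] M)
    (h : M →ₗ[k] C ⊗[k] C) (ρ : M →ₗ[k] M ⊗[k] C) (φ : M →ₗ[k] C)
    (hMa : CoAnti ΔM) (hC : IsRBO lam ΔC RC) (hM : IsRBO lam ΔM RM) :
    IsRBO lam (prodCobra ΔC ΔM h ρ) (prodRB RC RM φ) ↔
  (TensorProduct.map φ RC ∘ₗ ρ
      - TensorProduct.map RC φ ∘ₗ (TensorProduct.comm k M C).toLinearMap ∘ₗ ρ
      - TensorProduct.map φ (LinearMap.id : C →ₗ[k] C) ∘ₗ ρ ∘ₗ RM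
      + lTensor C φ ∘ₗ (TensorProduct.comm k M C).toLinearMap ∘ₗ ρ ∘ₗ RM
      + TensorProduct.map φ φ ∘ₗ ΔM
      - (lTensor C RC + rTensor C RC
          + lam • (LinearMap.id : C ⊗[k] C →ₗ[k] C ⊗[k] C)) ∘ₗ ΔC ∘ₗ φ
    = (rTensor C RC + lTensor C RC
        + lam • (LinearMap.id : C ⊗[k] C →ₗ[k] C ⊗[k] C)) ∘ₗ h ∘ₗ RM
      - TensorProduct.map RC RC ∘ₗ h) ∧
  (TensorProduct.map RM φ ∘ₗ ΔM + TensorProduct.map RM RC ∘ₗ ρ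
    = lTensor M φ ∘ₗ ΔM ∘ₗ RM
      + (lTensor M RC + rTensor C RM
          + lam • (LinearMap.id : M ⊗[k] C →ₗ[k] M ⊗[k] C)) ∘ₗ ρ ∘ₗ RM) := by
  have i1 := LinearMap.congr_fun (prodCobra_inl ΔC ΔM h ρ)
  have i2 := LinearMap.congr_fun (prodCobra_inr ΔC ΔM h ρ)
  have j1 := LinearMap.congr_fun (prodRB_inl RC RM φ)
  have j2 := LinearMap.congr_fun (prodRB_inr RC RM φ)
  simp only [LinearMap.comp_apply, LinearMap.add_apply, LinearMap.sub_apply,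
    LinearEquiv.coe_coe] at i1 i2 j1 j2
  constructor
  · intro H
    constructor
    · ext1 m
      have := LinearMap.congr_fun H (inr k C M m)
      have := congrArg (TensorProduct.map (fst k C M) (fst k C M)) this
      simp only [LinearMap.rTensor_def, LinearMap.lTensor_def, LinearMap.comp_apply,
        LinearEquiv.coe_coe, i1, i2, j1, j2, LinearMap.add_apply, LinearMap.sub_apply,
        LinearMap.smul_apply, LinearMap.id_apply, map_smul, map_add, map_sub, map_map',
        prodRB_inl, prodRB_inr, map_add_l, map_add_r, LinearMap.id_comp, LinearMap.comp_id,
        LinearMap.comp_add, LinearMap.add_comp, ← LinearMap.comp_assoc,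
        fst_comp_inl, fst_inr', snd_comp_inr, snd_inl', LinearMap.zero_comp,
        TensorProduct.map_zero_left, TensorProduct.map_zero_right, LinearMap.zero_apply,
        TensorProduct.map_id] at this ⊢
      linear_combination (norm := module) this
    · ext1 m
      have := LinearMap.congr_fun H (inr k C M m)
      have := congrArg (TensorProduct.map (snd k C M) (fst k C M)) this
      simp only [LinearMap.rTensor_def, LinearMap.lTensor_def, LinearMap.comp_apply,
        LinearEquiv.coe_coe, i1, i2, j1, j2, LinearMap.add_apply, LinearMap.sub_apply,
        LinearMap.smul_apply, LinearMap.id_apply, map_smul, map_add, map_sub, map_map',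
        prodRB_inl, prodRB_inr, map_add_l, map_add_r, LinearMap.id_comp, LinearMap.comp_id,
        LinearMap.comp_add, LinearMap.add_comp, ← LinearMap.comp_assoc,
        fst_comp_inl, fst_inr', snd_comp_inr, snd_inl', LinearMap.zero_comp,
        TensorProduct.map_zero_left, TensorProduct.map_zero_right, LinearMap.zero_apply,
        TensorProduct.map_id] at this ⊢
      linear_combination (norm := module) this
  · rintro ⟨H5, H6⟩
    apply LinearMap.prod_ext
    · ext1 c
      have := congrArg (TensorProduct.map (inl k C M) (inl k C M)) (LinearMap.congr_fun hC c)
      simp only [LinearMap.comp_apply, i1, j1, 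
        LinearMap.add_apply, LinearMap.smul_apply, LinearMap.id_apply, map_smul, map_add,
        lT_map, rT_map, map_map', prodRB_inl] at this ⊢
      simp only [map_comp_b, map_comp_l, map_comp_r] at this ⊢
      exact this
    · ext1 m
      have h5 := congrArg (TensorProduct.map (inl k C M) (inl k C M)) (LinearMap.congr_fun H5 m)
      have h6 := congrArg (TensorProduct.map (inr k C M) (inl k C M)) (LinearMap.congr_fun H6 m)
      have h7 := congrArg (TensorProduct.map (inl k C M) (inr k C M))
        (congrArg (TensorProduct.comm k M C) (LinearMap.congr_fun H6 m))
      have h2 := congrArg (TensorProduct.map (inr k C M) (inr k C M)) (LinearMap.congr_fun hM m)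
      have ha : ∀ m, TensorProduct.comm k M M (ΔM m) = - ΔM m := fun m => by
        have := LinearMap.congr_fun hMa m
        simp only [LinearMap.neg_apply, LinearMap.comp_apply, LinearEquiv.coe_coe] at this
        rw [eq_neg_iff_add_eq_zero, ← eq_neg_iff_add_eq_zero.1 this, add_comm]
      simp only [LinearMap.rTensor_def, LinearMap.lTensor_def, LinearMap.comp_apply, LinearEquiv.coe_coe, i1, i2, j1, j2,
        LinearMap.add_apply, LinearMap.sub_apply, LinearMap.smul_apply, LinearMap.id_apply,
        map_smul, map_add, map_sub, map_neg, ha, comm_map',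
        map_map', prodRB_inl, prodRB_inr, map_add_l, map_add_r, LinearMap.id_comp, LinearMap.comp_id] at h5 h6 h7 h2 ⊢
      linear_combination (norm := module) h5 + h6 - h7 + h2

theorem jac_iff (ΔC : C →ₗ[k] C ⊗[k] C) (ΔM : M →ₗ[k] M ⊗[k] M)
    (h : M →ₗ[k] C ⊗[k] C) (ρ : M →ₗ[k] M ⊗[k] C)
    (hMa : CoAnti ΔM) (hC : CoJacobi ΔC) (hM : CoJacobi ΔM) :
    CoJacobi (prodCobra ΔC ΔM h ρ) ↔
  (lTensor C ΔC ∘ₗ h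
      - (TensorProduct.assoc k C C C).toLinearMap ∘ₗ rTensor C ΔC ∘ₗ h
      + lTensor C (TensorProduct.comm k C C).toLinearMap ∘ₗ
          (TensorProduct.assoc k C C C).toLinearMap ∘ₗ rTensor C ΔC ∘ₗ h
    = (TensorProduct.assoc k C C C).toLinearMap ∘ₗ
        TensorProduct.map h (LinearMap.id : C →ₗ[k] C) ∘ₗ ρ
      + lTensor C h ∘ₗ (TensorProduct.comm k M C).toLinearMap ∘ₗ ρ
      - lTensor C (TensorProduct.comm k C C).toLinearMap ∘ₗ
          (TensorProduct.assoc k C C C).toLinearMap ∘ₗ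
          TensorProduct.map h (LinearMap.id : C →ₗ[k] C) ∘ₗ ρ) ∧
  (lTensor M ΔC ∘ₗ ρ + lTensor M h ∘ₗ ΔM
    = (TensorProduct.assoc k M C C).toLinearMap ∘ₗ rTensor C ρ ∘ₗ ρ
      - lTensor M (TensorProduct.comm k C C).toLinearMap ∘ₗ
          (TensorProduct.assoc k M C C).toLinearMap ∘ₗ rTensor C ρ ∘ₗ ρ) ∧
  ((TensorProduct.assoc k M M C).toLinearMap ∘ₗ rTensor C ΔM ∘ₗ ρ
    = lTensor M (TensorProduct.comm k C M).toLinearMap ∘ₗ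
        (TensorProduct.assoc k M C M).toLinearMap ∘ₗ rTensor M ρ ∘ₗ ΔM
      + lTensor M ρ ∘ₗ ΔM) := by
  have i1 := LinearMap.congr_fun (prodCobra_inl ΔC ΔM h ρ)
  have i2 := LinearMap.congr_fun (prodCobra_inr ΔC ΔM h ρ)
  simp only [LinearMap.comp_apply, LinearMap.add_apply, LinearMap.sub_apply,
    LinearEquiv.coe_coe] at i1 i2
  change _ ↔ (_ = (TensorProduct.assoc k C C C).toLinearMap ∘ₗ rTensor C h ∘ₗ ρ + _
    - lTensor C (TensorProduct.comm k C C).toLinearMap ∘ₗ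
          (TensorProduct.assoc k C C C).toLinearMap ∘ₗ rTensor C h ∘ₗ ρ) ∧ _
  constructor
  · intro H
    have K := fun m => LinearMap.congr_fun H (inr k C M m)
    simp only [LinearMap.comp_apply, LinearEquiv.coe_coe, i1, i2, LinearMap.add_apply,
      LinearMap.sub_apply, map_add, map_sub, lT_map (prodCobra ΔC ΔM h ρ), rT_map (prodCobra ΔC ΔM h ρ), prodCobra_inl, prodCobra_inr,
      map_add_l, map_add_r, map_sub_l, map_sub_r, assoc_map_comp, map_comp_l, lcomm_map,
      LinearMap.zero_apply] at K
    refine ⟨?_, ?_, ?_⟩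
    · ext1 m
      have := congrArg (TensorProduct.map (fst k C M) (TensorProduct.map (fst k C M) (fst k C M)))
        (K m)
      simp only [map_add, map_sub, map_zero, map_map', ← TensorProduct.map_comp, fst_comp_inl,
        fst_inr', snd_comp_inr, snd_inl', TensorProduct.map_zero_left,
        TensorProduct.map_zero_right, LinearMap.zero_apply, TensorProduct.map_id,
        LinearMap.id_apply] at this
      simp only [LinearMap.comp_apply, LinearEquiv.coe_coe, LinearMap.add_apply,
        LinearMap.sub_apply]
      linear_combination (norm := module) this
    · ext1 m
      have := congrArg (TensorProduct.map (snd k C M) (TensorProduct.map (fst k C M) (fst k C M)))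
        (K m)
      simp only [map_add, map_sub, map_zero, map_map', ← TensorProduct.map_comp, fst_comp_inl,
        fst_inr', snd_comp_inr, snd_inl', TensorProduct.map_zero_left,
        TensorProduct.map_zero_right, LinearMap.zero_apply, TensorProduct.map_id,
        LinearMap.id_apply] at this
      simp only [LinearMap.comp_apply, LinearEquiv.coe_coe, LinearMap.add_apply,
        LinearMap.sub_apply]
      linear_combination (norm := module) this
    · ext1 m
      have := congrArg (TensorProduct.map (snd k C M) (TensorProduct.map (snd k C M) (fst k C M)))
        (K m)
      simp only [map_add, map_sub, map_zero, map_map', ← TensorProduct.map_comp, fst_comp_inl,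
        fst_inr', snd_comp_inr, snd_inl', TensorProduct.map_zero_left,
        TensorProduct.map_zero_right, LinearMap.zero_apply, TensorProduct.map_id,
        LinearMap.id_apply] at this
      simp only [LinearMap.comp_apply, LinearEquiv.coe_coe, LinearMap.add_apply,
        LinearMap.sub_apply]
      linear_combination (norm := module) -this
  · rintro ⟨H2, H3, H4⟩
    apply LinearMap.prod_ext
    · ext1 c
      have := congrArg (TensorProduct.map (inl k C M) (TensorProduct.map (inl k C M) (inl k C M)))
        (LinearMap.congr_fun hC c)
      simp only [LinearMap.comp_apply, LinearEquiv.coe_coe, i1, i2, LinearMap.add_apply,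
        LinearMap.sub_apply, map_add, map_sub, lT_map (prodCobra ΔC ΔM h ρ), rT_map (prodCobra ΔC ΔM h ρ), prodCobra_inl, prodCobra_inr,
        map_add_l, map_add_r, map_sub_l, map_sub_r, assoc_map_comp, map_comp_l, lcomm_map,
        LinearMap.zero_apply, LinearMap.zero_comp, map_zero] at this ⊢
      exact this
    · ext1 m
      have ha : TensorProduct.comm k M M (ΔM m) = - ΔM m := by
        have := LinearMap.congr_fun hMa m
        simp only [LinearMap.neg_apply, LinearMap.comp_apply, LinearEquiv.coe_coe] at this
        rw [eq_neg_iff_add_eq_zero, ← eq_neg_iff_add_eq_zero.1 this, add_comm]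
      have e2 := LinearMap.congr_fun H2 m
      have e3 := LinearMap.congr_fun H3 m
      have e4 := LinearMap.congr_fun H4 m
      have eM := LinearMap.congr_fun hM m
      simp only [LinearMap.comp_apply, LinearEquiv.coe_coe, LinearMap.add_apply,
        LinearMap.sub_apply, LinearMap.zero_apply] at e2 e3 e4 eM
      -- MCM
      have e5 := congrArg (lTensor M (TensorProduct.comm k M C).toLinearMap) e4
      simp only [map_add, lcomm_lcomm, lcomm_lTensor ρ] at e5
      -- CMM
      have e6 := congrArg cycT e4
      simp only [cycT_add, cyc_assoc, cyc_comm_assoc, cyc_lTensor ρ, ha, map_neg] at e6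
      -- CMC
      have e7 := congrArg (TensorProduct.leftComm k M C C) e3
      simp only [map_add, map_sub, lc_assoc, lc_comm_assoc, lc_lTensor ΔC, lc_lTensor h, ha, map_neg] at e7
      -- CCM
      have e8 := congrArg (lTensor C (TensorProduct.comm k M C).toLinearMap) e7
      simp only [map_add, map_sub, map_neg, lcomm_lcomm, lcomm_lTensor ρ] at e8
      have f2 := congrArg (TensorProduct.map (inl k C M)
        (TensorProduct.map (inl k C M) (inl k C M))) e2
      have f3 := congrArg (TensorProduct.map (inr k C M)
        (TensorProduct.map (inl k C M) (inl k C M))) e3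
      have f4 := congrArg (TensorProduct.map (inr k C M)
        (TensorProduct.map (inr k C M) (inl k C M))) e4
      have f5 := congrArg (TensorProduct.map (inr k C M)
        (TensorProduct.map (inl k C M) (inr k C M))) e5
      have f6 := congrArg (TensorProduct.map (inl k C M)
        (TensorProduct.map (inr k C M) (inr k C M))) e6
      have f7 := congrArg (TensorProduct.map (inl k C M)
        (TensorProduct.map (inr k C M) (inl k C M))) e7
      have f8 := congrArg (TensorProduct.map (inl k C M)
        (TensorProduct.map (inl k C M) (inr k C M))) e8
      have fM := congrArg (TensorProduct.map (inr k C M)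
        (TensorProduct.map (inr k C M) (inr k C M))) eM
      simp only [map_add, map_sub, map_neg, map_zero] at f2 f3 f4 f5 f6 f7 f8 fM
      simp only [LinearMap.comp_apply, LinearEquiv.coe_coe, i1, i2, LinearMap.add_apply,
        LinearMap.sub_apply, map_add, map_sub, lT_map (prodCobra ΔC ΔM h ρ), rT_map (prodCobra ΔC ΔM h ρ), prodCobra_inl, prodCobra_inr,
        map_add_l, map_add_r, map_sub_l, map_sub_r, assoc_map_comp, map_comp_l, lcomm_map,
        LinearMap.zero_apply, LinearMap.zero_comp, map_zero]
      linear_combination (norm := module) f2 + f3 - f4 + f5 - f6 - f7 + f8 + fM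

end helpers

theorem stmt6 (lam : k) (ΔC : C →ₗ[k] C ⊗[k] C) (RC : C →ₗ[k] C)
    (ΔM : M →ₗ[k] M ⊗[k] M) (RM : M →ₗ[k] M)
    (hC : IsRBLC lam ΔC RC) (hM : IsRBLC lam ΔM RM)
    (h : M →ₗ[k] C ⊗[k] C) (ρ : M →ₗ[k] M ⊗[k] C) (φ : M →ₗ[k] C) :
    IsRBLC lam (prodCobra ΔC ΔM h ρ) (prodRB RC RM φ) ↔
      NA2Cocycle lam ΔC RC ΔM RM h ρ φ := by
  have ja := anti_iff ΔC ΔM h ρ hC.1 hM.1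
  have jj := jac_iff ΔC ΔM h ρ hM.1 hC.2.1 hM.2.1
  have jr := rbo_iff lam ΔC ΔM RC RM h ρ φ hM.1 hC.2.2 hM.2.2
  unfold IsRBLC NA2Cocycle
  rw [ja, jj, jr]
  tauto

end
end

section
/- Let 0 → C →f E →g M → 0 be a non-abelian extension of λ-weighted Rota-Baxter Lie coalgebras with retraction t. Then the induced maps h_t, ρ_t, φ_t are well defined (independent of the choice of preimage under g), and the triple (h_t, ρ_t, φ_t) is a non-abelian 2-cocycle on (C, Δ_C, R_C) with values in (M, Δ_M, R_M). -/
open TensorProduct LinearMap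

section

variable {k : Type*} [Field k]
variable {C : Type*} [AddCommGroup C] [Module k C]
variable {M : Type*} [AddCommGroup M] [Module k M]
variable {E : Type*} [AddCommGroup E] [Module k E]

set_option linter.unusedSimpArgs false

theorem tmap_sub_left {A B D F : Type*} [AddCommGroup A] [Module k A] [AddCommGroup B] [Module k B]
    [AddCommGroup D] [Module k D] [AddCommGroup F] [Module k F] (u v : A →ₗ[k] B) (w : D →ₗ[k] F) :
    TensorProduct.map (u - v) w = TensorProduct.map u w - TensorProduct.map v w :=
  TensorProduct.ext' fun _ _ => by simp [TensorProduct.sub_tmul]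

theorem tmap_sub_right {A B D F : Type*} [AddCommGroup A] [Module k A] [AddCommGroup B] [Module k B]
    [AddCommGroup D] [Module k D] [AddCommGroup F] [Module k F] (w : D →ₗ[k] F) (u v : A →ₗ[k] B) :
    TensorProduct.map w (u - v) = TensorProduct.map w u - TensorProduct.map w v :=
  TensorProduct.ext' fun _ _ => by simp [TensorProduct.tmul_sub]

theorem coJacobi_nat {A B D : Type*} [AddCommGroup A] [Module k A] [AddCommGroup B] [Module k B]
    [AddCommGroup D] [Module k D] (ΔE : E →ₗ[k] E ⊗[k] E) (jE : CoJacobi ΔE)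
    (u : E →ₗ[k] A) (v : E →ₗ[k] B) (w : E →ₗ[k] D) (e : E) :
    TensorProduct.map u (TensorProduct.map v w ∘ₗ ΔE) (ΔE e)
      - TensorProduct.assoc k A B D (TensorProduct.map (TensorProduct.map u v ∘ₗ ΔE) w (ΔE e))
      + lTensor A (TensorProduct.comm k D B).toLinearMap
        (TensorProduct.assoc k A D B
          (TensorProduct.map (TensorProduct.map u w ∘ₗ ΔE) v (ΔE e))) = 0 := by
  have h := congrArg (TensorProduct.map u (TensorProduct.map v w)) (LinearMap.congr_fun jE e)
  simp only [LinearMap.add_apply, LinearMap.sub_apply, LinearMap.comp_apply,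
    LinearEquiv.coe_coe, LinearMap.zero_apply, map_add, map_sub, map_zero] at h
  have e1 : ∀ x, TensorProduct.map u (TensorProduct.map v w) (lTensor E ΔE x)
      = TensorProduct.map u (TensorProduct.map v w ∘ₗ ΔE) x := fun x => by
    simp only [lTensor, TensorProduct.map_map, LinearMap.comp_id]
  have e2 : ∀ x, TensorProduct.map u (TensorProduct.map v w)
        (TensorProduct.assoc k E E E (rTensor E ΔE x))
      = TensorProduct.assoc k A B D (TensorProduct.map (TensorProduct.map u v ∘ₗ ΔE) w x) :=
    fun x => by
      rw [TensorProduct.map_map_assoc]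
      simp only [rTensor, TensorProduct.map_map, LinearMap.comp_id]
  have e3 : ∀ x, TensorProduct.map u (TensorProduct.map v w)
        (lTensor E (TensorProduct.comm k E E).toLinearMap
          (TensorProduct.assoc k E E E (rTensor E ΔE x)))
      = lTensor A (TensorProduct.comm k D B).toLinearMap (TensorProduct.assoc k A D B
          (TensorProduct.map (TensorProduct.map u w ∘ₗ ΔE) v x)) :=
    fun x => by
      have c : TensorProduct.map v w ∘ₗ (TensorProduct.comm k E E).toLinearMap
          = (TensorProduct.comm k D B).toLinearMap ∘ₗ TensorProduct.map w v :=
        TensorProduct.ext' fun _ _ => rfl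
      have a : TensorProduct.assoc k A D B
            (TensorProduct.map (TensorProduct.map u w ∘ₗ ΔE) v x)
          = TensorProduct.map u (TensorProduct.map w v)
              (TensorProduct.assoc k E E E (rTensor E ΔE x)) := by
        rw [TensorProduct.map_map_assoc]
        simp only [rTensor, TensorProduct.map_map, LinearMap.comp_id]
      rw [a]
      simp only [lTensor, TensorProduct.map_map, LinearMap.comp_id, LinearMap.id_comp, c]
  rw [e1, e2, e3] at h
  exact h

theorem stmt7 (lam : k) (ΔC : C →ₗ[k] C ⊗[k] C) (RC : C →ₗ[k] C)
    (ΔM : M →ₗ[k] M ⊗[k] M) (RM : M →ₗ[k] M)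
    (ΔE : E →ₗ[k] E ⊗[k] E) (RE : E →ₗ[k] E)
    (hC : IsRBLC lam ΔC RC) (hM : IsRBLC lam ΔM RM) (hE : IsRBLC lam ΔE RE)
    (f : C →ₗ[k] E) (g : E →ₗ[k] M)
    (homf : IsHom ΔC RC ΔE RE f) (homg : IsHom ΔE RE ΔM RM g)
    (injf : Function.Injective f) (surjg : Function.Surjective g)
    (hexact : LinearMap.range f = LinearMap.ker g)
    (t : E →ₗ[k] C) (ht : t ∘ₗ f = LinearMap.id) :
    -- `h_t`, `ρ_t`, `φ_t` are well defined, i.e. independent of the choice of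
    -- preimage under `g`:
    ((∀ e e' : E, g e = g e' →
        (TensorProduct.map t t) (ΔE e) - ΔC (t e)
          = (TensorProduct.map t t) (ΔE e') - ΔC (t e')) ∧
     (∀ e e' : E, g e = g e' →
        (TensorProduct.map g t) (ΔE e) = (TensorProduct.map g t) (ΔE e')) ∧
     (∀ e e' : E, g e = g e' → t (RE e) - RC (t e) = t (RE e') - RC (t e'))) ∧
    -- and the resulting triple `(h_t, ρ_t, φ_t)` is a non-abelian 2-cocycle:
    (∀ (hT : M →ₗ[k] C ⊗[k] C) (ρT : M →ₗ[k] M ⊗[k] C) (φT : M →ₗ[k] C),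
      hT ∘ₗ g = TensorProduct.map t t ∘ₗ ΔE - ΔC ∘ₗ t →
      ρT ∘ₗ g = TensorProduct.map g t ∘ₗ ΔE →
      φT ∘ₗ g = t ∘ₗ RE - RC ∘ₗ t →
      NA2Cocycle lam ΔC RC ΔM RM hT ρT φT) := by
  obtain ⟨aC, jC, rC⟩ := hC
  obtain ⟨aE, jE, rE⟩ := hE
  have gf : ∀ c, g (f c) = 0 := fun c => by
    have : f c ∈ LinearMap.ker g := hexact ▸ LinearMap.mem_range_self f c
    exact this
  have gf0 : g ∘ₗ f = 0 := LinearMap.ext gf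
  have tf : ∀ c, t (f c) = c := fun c => LinearMap.congr_fun ht c
  have key : ∀ e e', g e = g e' → ∃ c, e = e' + f c := by
    intro e e' h
    have : e - e' ∈ LinearMap.range f := by
      rw [hexact, LinearMap.mem_ker, map_sub, h, sub_self]
    obtain ⟨c, hc⟩ := this
    exact ⟨c, by rw [hc]; abel⟩
  have Δf : ∀ c, ΔE (f c) = TensorProduct.map f f (ΔC c) :=
    fun c => (LinearMap.congr_fun homf.1 c).symm
  have Rf : ∀ c, RE (f c) = f (RC c) := fun c => LinearMap.congr_fun homf.2 c
  refine ⟨⟨?_, ?_, ?_⟩, ?_⟩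
  · intro e e' h
    obtain ⟨c, rfl⟩ := key e e' h
    have : TensorProduct.map t t (TensorProduct.map f f (ΔC c)) = ΔC c := by
      rw [← LinearMap.comp_apply, ← TensorProduct.map_comp, ht, TensorProduct.map_id]; rfl
    simp only [map_add, Δf, tf, this]
    abel
  · intro e e' h
    obtain ⟨c, rfl⟩ := key e e' h
    have : TensorProduct.map g t (TensorProduct.map f f (ΔC c)) = 0 := by
      rw [← LinearMap.comp_apply, ← TensorProduct.map_comp, gf0, TensorProduct.map_zero_left]; rfl
    simp only [map_add, Δf, this, add_zero]
  · intro e e' h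
    obtain ⟨c, rfl⟩ := key e e' h
    simp only [map_add, Rf, tf]
    abel
  intro h ρ φ hh hρ hφ
  have Δg : ∀ e, ΔM (g e) = TensorProduct.map g g (ΔE e) :=
    fun e => (LinearMap.congr_fun homg.1 e).symm
  have Rg : ∀ e, RM (g e) = g (RE e) := fun e => LinearMap.congr_fun homg.2 e
  have hh' : ∀ e, h (g e) = TensorProduct.map t t (ΔE e) - ΔC (t e) :=
    fun e => LinearMap.congr_fun hh e
  have hρ' : ∀ e, ρ (g e) = TensorProduct.map g t (ΔE e) := fun e => LinearMap.congr_fun hρ e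
  have hφ' : ∀ e, φ (g e) = t (RE e) - RC (t e) := fun e => LinearMap.congr_fun hφ e
  have aE' : ∀ e, TensorProduct.comm k E E (ΔE e) = - ΔE e := fun e => by
    have := LinearMap.congr_fun aE e
    simp only [LinearMap.neg_apply, LinearMap.comp_apply, LinearEquiv.coe_coe] at this
    rw [eq_comm, neg_eq_iff_eq_neg]; exact this
  have cρ : ∀ e, TensorProduct.comm k M C (TensorProduct.map g t (ΔE e))
      = - TensorProduct.map t g (ΔE e) := fun e => by
    rw [← TensorProduct.map_comm, aE', map_neg]
  have aC' : ∀ c, TensorProduct.comm k C C (ΔC c) = - ΔC c := fun c => by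
    have := LinearMap.congr_fun aC c
    simp only [LinearMap.neg_apply, LinearMap.comp_apply, LinearEquiv.coe_coe] at this
    rw [eq_comm, neg_eq_iff_eq_neg]; exact this
  have jE' := fun e => LinearMap.congr_fun jE e
  have jC' := fun e => LinearMap.congr_fun jC e
  have rE' := fun e => LinearMap.congr_fun rE e
  have rC' := fun e => LinearMap.congr_fun rC e
  simp only [LinearMap.add_apply, LinearMap.sub_apply, LinearMap.comp_apply, LinearMap.smul_apply,
    LinearEquiv.coe_coe, LinearMap.zero_apply, LinearMap.id_apply] at jE' jC' rE' rC'
  refine ⟨?_, ?_, ?_, ?_, ?_, ?_⟩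
  all_goals
    rw [← LinearMap.cancel_right surjg]
    refine LinearMap.ext fun e => ?_
    simp only [LinearMap.add_apply, LinearMap.sub_apply, LinearMap.comp_apply,
      LinearMap.smul_apply, LinearEquiv.coe_coe, LinearMap.zero_apply, LinearMap.id_apply,
      hh', hρ', Δg, Rg, hφ', cρ]
  · rw [map_sub, ← TensorProduct.map_comm, aE', aC', map_neg]; abel
  · have h1 := jC' (t e)
    have h2 := coJacobi_nat ΔE jE t t t e
    simp only [lTensor, rTensor, TensorProduct.map_map, LinearMap.id_comp, LinearMap.comp_id, map_neg, map_sub, map_add, LinearMap.sub_apply, LinearMap.add_apply,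
      hh, hρ, hφ, ← homg.1, ← homg.2, tmap_sub_left, tmap_sub_right, LinearMap.comp_sub] at h1 h2 ⊢
    linear_combination (norm := module) h2 - h1
  · have h1 := jC' (t e)
    have h2 := coJacobi_nat ΔE jE g t t e
    simp only [lTensor, rTensor, TensorProduct.map_map, LinearMap.id_comp, LinearMap.comp_id, map_neg, map_sub, map_add, LinearMap.sub_apply, LinearMap.add_apply,
      hh, hρ, hφ, ← homg.1, ← homg.2, tmap_sub_left, tmap_sub_right, LinearMap.comp_sub] at h1 h2 ⊢
    linear_combination (norm := module) h2
  · have h1 := jC' (t e)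
    have h2 := coJacobi_nat ΔE jE g g t e
    simp only [lTensor, rTensor, TensorProduct.map_map, LinearMap.id_comp, LinearMap.comp_id, map_neg, map_sub, map_add, LinearMap.sub_apply, LinearMap.add_apply,
      hh, hρ, hφ, ← homg.1, ← homg.2, tmap_sub_left, tmap_sub_right, LinearMap.comp_sub] at h1 h2 ⊢
    linear_combination (norm := module) -h2
  · have h1 := rC' (t e)
    have h2 := congrArg (TensorProduct.map t t) (rE' e)
    simp only [map_add, map_smul] at h2
    simp only [lTensor, rTensor, TensorProduct.map_map, LinearMap.id_comp, LinearMap.comp_id, map_neg, map_sub, map_add, LinearMap.sub_apply, LinearMap.add_apply,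
      hh, hρ, hφ, ← homg.1, ← homg.2, tmap_sub_left, tmap_sub_right, LinearMap.comp_sub] at h1 h2 ⊢
    linear_combination (norm := module) h2 - h1
  · have h1 := rC' (t e)
    have h2 := congrArg (TensorProduct.map g t) (rE' e)
    simp only [map_add, map_smul] at h2
    simp only [lTensor, rTensor, TensorProduct.map_map, LinearMap.id_comp, LinearMap.comp_id, map_neg, map_sub, map_add, LinearMap.sub_apply, LinearMap.add_apply,
      hh, hρ, hφ, ← homg.1, ← homg.2, tmap_sub_left, tmap_sub_right, LinearMap.comp_sub] at h1 h2 ⊢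
    linear_combination (norm := module) h2

end
end

section
/- Let 0 → C →f E →g M → 0 be a non-abelian extension of λ-weighted Rota-Baxter Lie coalgebras, let t₁ and t₂ be two retractions, and let (h₁, ρ₁, φ₁) and (h₂, ρ₂, φ₂) be the non-abelian 2-cocycles they induce. Then (h₁, ρ₁, φ₁) and (h₂, ρ₂, φ₂) are equivalent; explicitly, the linear map s : M → C given by s(g(e)) = t₂(e) − t₁(e) is well defined and satisfies h₂ − h₁ = (s⊗I)ρ₁ − τ(s⊗I)ρ₁ + (s⊗s)Δ_M − Δ_C s, ρ₂ − ρ₁ = (I⊗s)Δ_M, and φ₂ − φ₁ = sR_M − R_C s. -/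
open TensorProduct LinearMap

section

variable {k : Type*} [Field k]
variable {C : Type*} [AddCommGroup C] [Module k C]
variable {M : Type*} [AddCommGroup M] [Module k M]
variable {E : Type*} [AddCommGroup E] [Module k E]

theorem stmt8 (lam : k) (ΔC : C →ₗ[k] C ⊗[k] C) (RC : C →ₗ[k] C)
    (ΔM : M →ₗ[k] M ⊗[k] M) (RM : M →ₗ[k] M)
    (ΔE : E →ₗ[k] E ⊗[k] E) (RE : E →ₗ[k] E)
    (hC : IsRBLC lam ΔC RC) (hM : IsRBLC lam ΔM RM) (hE : IsRBLC lam ΔE RE)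
    (f : C →ₗ[k] E) (g : E →ₗ[k] M)
    (homf : IsHom ΔC RC ΔE RE f) (homg : IsHom ΔE RE ΔM RM g)
    (injf : Function.Injective f) (surjg : Function.Surjective g)
    (hexact : LinearMap.range f = LinearMap.ker g)
    (t₁ t₂ : E →ₗ[k] C) (ht₁ : t₁ ∘ₗ f = LinearMap.id) (ht₂ : t₂ ∘ₗ f = LinearMap.id)
    (h₁ : M →ₗ[k] C ⊗[k] C) (ρ₁ : M →ₗ[k] M ⊗[k] C) (φ₁ : M →ₗ[k] C)
    (h₂ : M →ₗ[k] C ⊗[k] C) (ρ₂ : M →ₗ[k] M ⊗[k] C) (φ₂ : M →ₗ[k] C)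
    (hh₁ : h₁ ∘ₗ g = TensorProduct.map t₁ t₁ ∘ₗ ΔE - ΔC ∘ₗ t₁)
    (hρ₁ : ρ₁ ∘ₗ g = TensorProduct.map g t₁ ∘ₗ ΔE)
    (hφ₁ : φ₁ ∘ₗ g = t₁ ∘ₗ RE - RC ∘ₗ t₁)
    (hh₂ : h₂ ∘ₗ g = TensorProduct.map t₂ t₂ ∘ₗ ΔE - ΔC ∘ₗ t₂)
    (hρ₂ : ρ₂ ∘ₗ g = TensorProduct.map g t₂ ∘ₗ ΔE)
    (hφ₂ : φ₂ ∘ₗ g = t₂ ∘ₗ RE - RC ∘ₗ t₂) :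
    -- `s(g(e)) = t₂(e) − t₁(e)` is well defined:
    (∀ e e' : E, g e = g e' → t₂ e - t₁ e = t₂ e' - t₁ e') ∧
    -- and it realizes an equivalence between the two induced 2-cocycles:
    (∀ s : M →ₗ[k] C, s ∘ₗ g = t₂ - t₁ →
      EquivVia ΔC RC ΔM RM s h₁ ρ₁ φ₁ h₂ ρ₂ φ₂) := by
  refine ⟨fun e e' hee => ?_, fun s hs => ?_⟩
  · have hk : e - e' ∈ LinearMap.range f := by
      rw [hexact, LinearMap.mem_ker, map_sub, hee, sub_self]
    obtain ⟨c, hc⟩ := hk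
    have e1 : t₁ (e - e') = c := by
      rw [← hc]; exact LinearMap.congr_fun ht₁ c
    have e2 : t₂ (e - e') = c := by
      rw [← hc]; exact LinearMap.congr_fun ht₂ c
    rw [map_sub] at e1 e2
    have e3 : t₂ e - t₂ e' = t₁ e - t₁ e' := e2.trans e1.symm
    rw [sub_eq_sub_iff_add_eq_add] at e3 ⊢
    rw [e3, add_comm]
  · have ht : t₂ = t₁ + s ∘ₗ g := by rw [hs]; abel
    have hanti : ΔE = -((TensorProduct.comm k E E).toLinearMap ∘ₗ ΔE) := hE.1
    obtain ⟨hg1, hg2⟩ := homg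
    refine ⟨?_, ?_, ?_⟩
    · ext m
      obtain ⟨e, rfl⟩ := surjg m
      have a1 := LinearMap.congr_fun hh₁ e
      have a2 := LinearMap.congr_fun hh₂ e
      have a3 := LinearMap.congr_fun hρ₁ e
      have a4 := LinearMap.congr_fun hg1 e
      have a5 := LinearMap.congr_fun hanti e
      simp only [LinearMap.comp_apply, LinearMap.sub_apply, LinearMap.add_apply,
        LinearMap.neg_apply, LinearEquiv.coe_coe] at a1 a2 a3 a4 a5 ⊢
      rw [a1, a2, a3, ← a4, ht]
      have b1 : ∀ x : E ⊗[k] E, TensorProduct.map s (LinearMap.id : C →ₗ[k] C)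
          (TensorProduct.map g t₁ x) = TensorProduct.map (s ∘ₗ g) t₁ x := fun x => by
        rw [← LinearMap.comp_apply, ← TensorProduct.map_comp, LinearMap.id_comp]
      have b2 : ∀ x : E ⊗[k] E, TensorProduct.map s s
          (TensorProduct.map g g x) = TensorProduct.map (s ∘ₗ g) (s ∘ₗ g) x := fun x => by
        rw [← LinearMap.comp_apply, ← TensorProduct.map_comp]
      have b3 : TensorProduct.comm k C C (TensorProduct.map (s ∘ₗ g) t₁ (ΔE e))
          = - TensorProduct.map t₁ (s ∘ₗ g) (ΔE e) := by
        have a6 : TensorProduct.comm k E E (ΔE e) = -ΔE e := by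
          exact neg_eq_iff_eq_neg.mp a5.symm
        rw [← TensorProduct.map_comm, a6, map_neg]
      rw [b1, b2, b3]
      simp only [TensorProduct.map_add_left, TensorProduct.map_add_right, LinearMap.add_apply,
        LinearMap.comp_apply, map_add]
      abel
    · ext m
      obtain ⟨e, rfl⟩ := surjg m
      have a2 := LinearMap.congr_fun hρ₂ e
      have a3 := LinearMap.congr_fun hρ₁ e
      have a4 := LinearMap.congr_fun hg1 e
      simp only [LinearMap.comp_apply, LinearMap.sub_apply] at a2 a3 a4 ⊢
      rw [a2, a3, ← a4, ht, TensorProduct.map_add_right, LinearMap.add_apply, LinearMap.lTensor,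
        ← LinearMap.comp_apply (TensorProduct.map LinearMap.id s), ← TensorProduct.map_comp,
        LinearMap.id_comp]
      abel
    · ext m
      obtain ⟨e, rfl⟩ := surjg m
      have a2 := LinearMap.congr_fun hφ₂ e
      have a3 := LinearMap.congr_fun hφ₁ e
      have a4 := LinearMap.congr_fun hg2 e
      simp only [LinearMap.comp_apply, LinearMap.sub_apply] at a2 a3 a4 ⊢
      rw [a2, a3, a4, ht]
      simp only [LinearMap.add_apply, LinearMap.comp_apply, map_add]
      abel

end
end

section
/- Let (C, Δ_C, R_C) and (M, Δ_M, R_M) be λ-weighted Rota-Baxter Lie coalgebras. The assignment sending the equivalence class of a non-abelian extension of (C, Δ_C, R_C) by (M, Δ_M, R_M) to the equivalence class of the non-abelian 2-cocycle induced by any retraction is a well-defined bijection between the set Ext_nab(M,C) of equivalence classes of non-abelian extensions and the set H²_nab(M,C) of equivalence classes of non-abelian 2-cocycles. -/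
open TensorProduct LinearMap

section

universe u

variable (k : Type*) [Field k]
variable (C M : Type u) [AddCommGroup C] [Module k C] [AddCommGroup M] [Module k M]
variable (lam : k) (ΔC : C →ₗ[k] C ⊗[k] C) (RC : C →ₗ[k] C)
variable (ΔM : M →ₗ[k] M ⊗[k] M) (RM : M →ₗ[k] M)

/-- A non-abelian extension of `(C, Δ_C, R_C)` by `(M, Δ_M, R_M)`. -/
structure NAExt where
  E : Type u
  [abE : AddCommGroup E]
  [modE : Module k E]
  ΔE : E →ₗ[k] E ⊗[k] E
  RE : E →ₗ[k] E
  rblc : IsRBLC lam ΔE RE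
  f : C →ₗ[k] E
  g : E →ₗ[k] M
  homf : IsHom ΔC RC ΔE RE f
  homg : IsHom ΔE RE ΔM RM g
  injf : Function.Injective f
  surjg : Function.Surjective g
  exact : LinearMap.range f = LinearMap.ker g

attribute [instance] NAExt.abE NAExt.modE

variable {k C M lam ΔC RC ΔM RM}

/-- Equivalence of non-abelian extensions. -/
def NAExtRel (X Y : NAExt k C M lam ΔC RC ΔM RM) : Prop :=
  ∃ θ : X.E →ₗ[k] Y.E, IsHom X.ΔE X.RE Y.ΔE Y.RE θ ∧ Function.Bijective θ ∧
    θ ∘ₗ X.f = Y.f ∧ Y.g ∘ₗ θ = X.g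

variable (k C M lam ΔC RC ΔM RM) in
/-- Bundled non-abelian 2-cocycles. -/
def Cocycle : Type _ :=
  {x : (M →ₗ[k] C ⊗[k] C) × (M →ₗ[k] M ⊗[k] C) × (M →ₗ[k] C) //
    NA2Cocycle lam ΔC RC ΔM RM x.1 x.2.1 x.2.2}

/-- Equivalence of non-abelian 2-cocycles. -/
def CocycleRel (x y : Cocycle k C M lam ΔC RC ΔM RM) : Prop :=
  CocEquiv ΔC RC ΔM RM x.1.1 x.1.2.1 x.1.2.2 y.1.1 y.1.2.1 y.1.2.2

section Helpers

set_option linter.unusedSimpArgs false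

variable {k : Type*} [Field k]
variable {C : Type*} [AddCommGroup C] [Module k C]
variable {M : Type*} [AddCommGroup M] [Module k M]
variable {E : Type*} [AddCommGroup E] [Module k E]
variable {A B A' B' V W V' W' : Type*} [AddCommGroup A] [Module k A] [AddCommGroup B] [Module k B]
  [AddCommGroup A'] [Module k A'] [AddCommGroup B'] [Module k B']
  [AddCommGroup V] [Module k V] [AddCommGroup W] [Module k W]
  [AddCommGroup V'] [Module k V'] [AddCommGroup W'] [Module k W']

/-- co-Jacobi defect -/
noncomputable def Jdef (Δ : E →ₗ[k] E ⊗[k] E) (e : E) : E ⊗[k] (E ⊗[k] E) :=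
  lTensor E Δ (Δ e) - TensorProduct.assoc k E E E (rTensor E Δ (Δ e))
    + lTensor E (TensorProduct.comm k E E).toLinearMap
        (TensorProduct.assoc k E E E (rTensor E Δ (Δ e)))

/-- Rota-Baxter defect -/
noncomputable def Ddef (lam : k) (Δ : E →ₗ[k] E ⊗[k] E) (R : E →ₗ[k] E) (e : E) : E ⊗[k] E :=
  TensorProduct.map R R (Δ e)
    - (lTensor E R (Δ (R e)) + rTensor E R (Δ (R e)) + lam • Δ (R e))

lemma coAnti_iff (Δ : E →ₗ[k] E ⊗[k] E) :
    CoAnti Δ ↔ ∀ e, TensorProduct.comm k E E (Δ e) = - Δ e := by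
  unfold CoAnti
  rw [LinearMap.ext_iff]
  refine forall_congr' fun e => ?_
  simp only [LinearMap.neg_apply, LinearMap.comp_apply, LinearEquiv.coe_coe]
  constructor
  · intro h
    rw [eq_neg_iff_add_eq_zero, add_comm, ← eq_neg_iff_add_eq_zero]
    exact h
  · intro h
    rw [h, neg_neg]

lemma coJacobi_iff (Δ : E →ₗ[k] E ⊗[k] E) :
    CoJacobi Δ ↔ ∀ e, Jdef Δ e = 0 := by
  unfold CoJacobi Jdef
  rw [LinearMap.ext_iff]
  rfl

lemma isRBO_iff (lam : k) (Δ : E →ₗ[k] E ⊗[k] E) (R : E →ₗ[k] E) :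
    IsRBO lam Δ R ↔ ∀ e, Ddef lam Δ R e = 0 := by
  unfold IsRBO Ddef
  rw [LinearMap.ext_iff]
  refine forall_congr' fun e => ?_
  rw [sub_eq_zero]
  rfl

lemma comm_map (a : A →ₗ[k] V) (b : B →ₗ[k] W) (x : A ⊗[k] B) :
    TensorProduct.comm k V W (TensorProduct.map a b x)
      = TensorProduct.map b a (TensorProduct.comm k A B x) := by
  induction x with
  | zero => simp
  | tmul x y => simp
  | add x y hx hy => simp only [map_add, hx, hy]

lemma map_lT (a : E →ₗ[k] A) (b : E →ₗ[k] B) (c : E →ₗ[k] V) (Δ : E →ₗ[k] E ⊗[k] E)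
    (t : E →ₗ[k] C) (g : E →ₗ[k] M) (F : C →ₗ[k] B ⊗[k] V) (G : M →ₗ[k] B ⊗[k] V)
    (hyp : ∀ e, TensorProduct.map b c (Δ e) = F (t e) + G (g e)) (x : E ⊗[k] E) :
    TensorProduct.map a (TensorProduct.map b c) (lTensor E Δ x)
      = lTensor A F (TensorProduct.map a t x) + lTensor A G (TensorProduct.map a g x) := by
  induction x with
  | zero => simp
  | tmul x y => simp [hyp, tmul_add]
  | add x y hx hy => simp only [map_add, hx, hy]; abel

lemma map_rT (a : E →ₗ[k] A) (b : E →ₗ[k] B) (c : E →ₗ[k] V) (Δ : E →ₗ[k] E ⊗[k] E)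
    (t : E →ₗ[k] C) (g : E →ₗ[k] M) (F : C →ₗ[k] A ⊗[k] B) (G : M →ₗ[k] A ⊗[k] B)
    (hyp : ∀ e, TensorProduct.map a b (Δ e) = F (t e) + G (g e)) (x : E ⊗[k] E) :
    TensorProduct.map a (TensorProduct.map b c) (TensorProduct.assoc k E E E (rTensor E Δ x))
      = TensorProduct.assoc k A B V (rTensor V F (TensorProduct.map t c x))
        + TensorProduct.assoc k A B V (rTensor V G (TensorProduct.map g c x)) := by
  rw [TensorProduct.map_map_assoc, ← map_add]
  congr 1
  induction x with
  | zero => simp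
  | tmul x y => simp [hyp, add_tmul]
  | add x y hx hy => simp only [map_add, hx, hy]; abel

lemma map_lcomm (a : E →ₗ[k] A) (b : E →ₗ[k] B) (c : E →ₗ[k] V) (x : E ⊗[k] (E ⊗[k] E)) :
    TensorProduct.map a (TensorProduct.map b c)
        (lTensor E (TensorProduct.comm k E E).toLinearMap x)
      = lTensor A (TensorProduct.comm k V B).toLinearMap
        (TensorProduct.map a (TensorProduct.map c b) x) := by
  induction x with
  | zero => simp
  | tmul x y => simp [comm_map]
  | add x y hx hy => simp only [map_add, hx, hy]

lemma map_cyc (a : E →ₗ[k] A) (b : E →ₗ[k] B) (c : E →ₗ[k] V) (x : E ⊗[k] (E ⊗[k] E)) :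
    TensorProduct.map a (TensorProduct.map b c)
        (TensorProduct.assoc k E E E (TensorProduct.comm k E (E ⊗[k] E) x))
      = TensorProduct.assoc k A B V (TensorProduct.comm k V (A ⊗[k] B)
        (TensorProduct.map c (TensorProduct.map a b) x)) := by
  rw [comm_map, TensorProduct.map_map_assoc]

lemma J_cyc (Δ : E →ₗ[k] E ⊗[k] E) (hΔ : ∀ e, TensorProduct.comm k E E (Δ e) = - Δ e) (e : E) :
    TensorProduct.assoc k E E E (TensorProduct.comm k E (E ⊗[k] E) (Jdef Δ e)) = Jdef Δ e := by
  have h1 : ∀ x : E ⊗[k] E, lTensor E Δ (TensorProduct.comm k E E x)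
      = TensorProduct.comm k (E ⊗[k] E) E (rTensor E Δ x) := by
    intro x
    induction x with
    | zero => simp
    | tmul x y => simp
    | add x y hx hy => simp only [map_add, hx, hy]
  have h2 : ∀ x : E ⊗[k] E, rTensor E Δ x
      = - rTensor E (TensorProduct.comm k E E).toLinearMap (rTensor E Δ x) := by
    intro x
    induction x with
    | zero => simp
    | tmul x y => simp [hΔ, neg_tmul]
    | add x y hx hy => simp only [map_add, neg_add]; rw [← hx, ← hy]
  have h3 : Jdef Δ e = - (TensorProduct.comm k (E ⊗[k] E) E (rTensor E Δ (Δ e))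
      + TensorProduct.assoc k E E E (rTensor E Δ (Δ e))
      + lTensor E (TensorProduct.comm k E E).toLinearMap (TensorProduct.assoc k E E E
        (rTensor E (TensorProduct.comm k E E).toLinearMap (rTensor E Δ (Δ e))))) := by
    have h4 : lTensor E Δ (Δ e) = - TensorProduct.comm k (E ⊗[k] E) E (rTensor E Δ (Δ e)) := by
      rw [← h1, hΔ, map_neg, neg_neg]
    have h5 := congrArg (fun z => lTensor E (TensorProduct.comm k E E).toLinearMap
      (TensorProduct.assoc k E E E z)) (h2 (Δ e))
    simp only [map_neg] at h5
    unfold Jdef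
    rw [h4, h5]
    abel
  rw [h3]
  generalize rTensor E Δ (Δ e) = w
  rw [map_neg, map_neg, neg_inj]
  induction w with
  | zero => simp
  | add x y hx hy =>
    simp only [map_add] at hx hy ⊢
    have := congrArg₂ (· + ·) hx hy
    rw [← sub_eq_zero] at this ⊢
    rw [← this]
    abel
  | tmul x z =>
    induction x with
    | zero => simp
    | add x y hx hy =>
      simp only [map_add, add_tmul] at hx hy ⊢
      have := congrArg₂ (· + ·) hx hy
      rw [← sub_eq_zero] at this ⊢
      rw [← this]
      abel
    | tmul x y => simp; abel

lemma D_comm (lam : k) (Δ : E →ₗ[k] E ⊗[k] E) (R : E →ₗ[k] E)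
    (hΔ : ∀ e, TensorProduct.comm k E E (Δ e) = - Δ e) (e : E) :
    TensorProduct.comm k E E (Ddef lam Δ R e) = - Ddef lam Δ R e := by
  unfold Ddef lTensor rTensor
  simp only [map_sub, map_add, map_smul, comm_map, hΔ, map_neg, smul_neg]
  abel

/-- splitting data -/
structure Spl (lam : k) (ΔC : C →ₗ[k] C ⊗[k] C) (RC : C →ₗ[k] C)
    (ΔM : M →ₗ[k] M ⊗[k] M) (RM : M →ₗ[k] M)
    (ΔE : E →ₗ[k] E ⊗[k] E) (RE : E →ₗ[k] E) (t : E →ₗ[k] C) (g : E →ₗ[k] M)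
    (h : M →ₗ[k] C ⊗[k] C) (ρ : M →ₗ[k] M ⊗[k] C) (φ : M →ₗ[k] C) : Prop where
  tt : ∀ e, TensorProduct.map t t (ΔE e) = ΔC (t e) + h (g e)
  gt : ∀ e, TensorProduct.map g t (ΔE e) = ρ (g e)
  tg : ∀ e, TensorProduct.map t g (ΔE e) = - TensorProduct.comm k M C (ρ (g e))
  gg : ∀ e, TensorProduct.map g g (ΔE e) = ΔM (g e)
  tR : ∀ e, t (RE e) = RC (t e) + φ (g e)
  gR : ∀ e, g (RE e) = RM (g e)

section
variable {lam : k} {ΔC : C →ₗ[k] C ⊗[k] C} {RC : C →ₗ[k] C}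
    {ΔM : M →ₗ[k] M ⊗[k] M} {RM : M →ₗ[k] M}
    {ΔE : E →ₗ[k] E ⊗[k] E} {RE : E →ₗ[k] E} {t : E →ₗ[k] C} {g : E →ₗ[k] M}
    {h : M →ₗ[k] C ⊗[k] C} {ρ : M →ₗ[k] M ⊗[k] C} {φ : M →ₗ[k] C}


lemma Spl.gt'
    (S : Spl lam ΔC RC ΔM RM ΔE RE t g h ρ φ)
    (e : E) : TensorProduct.map g t (ΔE e) = (0 : C →ₗ[k] M ⊗[k] C) (t e) + ρ (g e) := by
  simp [S.gt]
lemma Spl.tg'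
    (S : Spl lam ΔC RC ΔM RM ΔE RE t g h ρ φ)
    (e : E) : TensorProduct.map t g (ΔE e) = (0 : C →ₗ[k] C ⊗[k] M) (t e)
    + (-((TensorProduct.comm k M C).toLinearMap ∘ₗ ρ)) (g e) := by
  simp [S.tg]
lemma Spl.gg'
    (S : Spl lam ΔC RC ΔM RM ΔE RE t g h ρ φ)
    (e : E) : TensorProduct.map g g (ΔE e)
    = (0 : C →ₗ[k] M ⊗[k] M) (t e) + ΔM (g e) := by
  simp [S.gg]

lemma Spl.J_ttt
    (S : Spl lam ΔC RC ΔM RM ΔE RE t g h ρ φ)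
    (e : E) : TensorProduct.map t (TensorProduct.map t t) (Jdef ΔE e)
    = Jdef ΔC (t e) +
    ((lTensor C ΔC ∘ₗ h
      - (TensorProduct.assoc k C C C).toLinearMap ∘ₗ rTensor C ΔC ∘ₗ h
      + lTensor C (TensorProduct.comm k C C).toLinearMap ∘ₗ
          (TensorProduct.assoc k C C C).toLinearMap ∘ₗ rTensor C ΔC ∘ₗ h) (g e)
    - ((TensorProduct.assoc k C C C).toLinearMap ∘ₗ
        TensorProduct.map h (LinearMap.id : C →ₗ[k] C) ∘ₗ ρ
      + lTensor C h ∘ₗ (TensorProduct.comm k M C).toLinearMap ∘ₗ ρ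
      - lTensor C (TensorProduct.comm k C C).toLinearMap ∘ₗ
          (TensorProduct.assoc k C C C).toLinearMap ∘ₗ
          TensorProduct.map h (LinearMap.id : C →ₗ[k] C) ∘ₗ ρ) (g e)) := by
  change _ = _ + (_ - ((TensorProduct.assoc k C C C).toLinearMap ∘ₗ rTensor C h ∘ₗ ρ
      + lTensor C h ∘ₗ (TensorProduct.comm k M C).toLinearMap ∘ₗ ρ
      - lTensor C (TensorProduct.comm k C C).toLinearMap ∘ₗ
          (TensorProduct.assoc k C C C).toLinearMap ∘ₗ rTensor C h ∘ₗ ρ) (g e))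
  unfold Jdef
  rw [map_add, map_sub, map_lcomm, map_lT t t t ΔE t g ΔC h S.tt, map_rT t t t ΔE t g ΔC h S.tt]
  simp only [S.tt, S.gt, S.tg, map_add, map_neg, LinearMap.add_apply, LinearMap.sub_apply,
    LinearMap.comp_apply, LinearEquiv.coe_coe]
  abel

lemma Spl.J_gtt
    (S : Spl lam ΔC RC ΔM RM ΔE RE t g h ρ φ)
    (e : E) : TensorProduct.map g (TensorProduct.map t t) (Jdef ΔE e)
    = (lTensor M ΔC ∘ₗ ρ + lTensor M h ∘ₗ ΔM) (g e)
    - ((TensorProduct.assoc k M C C).toLinearMap ∘ₗ rTensor C ρ ∘ₗ ρ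
      - lTensor M (TensorProduct.comm k C C).toLinearMap ∘ₗ
          (TensorProduct.assoc k M C C).toLinearMap ∘ₗ rTensor C ρ ∘ₗ ρ) (g e) := by
  unfold Jdef
  rw [map_add, map_sub, map_lcomm, map_lT g t t ΔE t g ΔC h S.tt, map_rT g t t ΔE t g 0 ρ S.gt']
  simp only [S.tt, S.gt, S.tg, S.gg, map_add, map_neg, LinearMap.add_apply, LinearMap.sub_apply,
    LinearMap.comp_apply, LinearEquiv.coe_coe, rTensor_zero, lTensor_zero, LinearMap.zero_apply,
    map_zero]
  abel

lemma Spl.J_ggt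
    (S : Spl lam ΔC RC ΔM RM ΔE RE t g h ρ φ)
    (e : E) : TensorProduct.map g (TensorProduct.map g t) (Jdef ΔE e)
    = (lTensor M (TensorProduct.comm k C M).toLinearMap ∘ₗ
        (TensorProduct.assoc k M C M).toLinearMap ∘ₗ rTensor M ρ ∘ₗ ΔM
      + lTensor M ρ ∘ₗ ΔM) (g e)
      - ((TensorProduct.assoc k M M C).toLinearMap ∘ₗ rTensor C ΔM ∘ₗ ρ) (g e) := by
  unfold Jdef
  rw [map_add, map_sub, map_lcomm, map_lT g g t ΔE t g 0 ρ S.gt', map_rT g g t ΔE t g 0 ΔM S.gg',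
    map_rT g t g ΔE t g 0 ρ S.gt']
  simp only [S.tt, S.gt, S.tg, S.gg, map_add, map_neg, LinearMap.add_apply, LinearMap.sub_apply,
    LinearMap.comp_apply, LinearEquiv.coe_coe, rTensor_zero, lTensor_zero, LinearMap.zero_apply,
    map_zero]
  abel

lemma Spl.J_ggg
    (S : Spl lam ΔC RC ΔM RM ΔE RE t g h ρ φ)
    (e : E) : TensorProduct.map g (TensorProduct.map g g) (Jdef ΔE e)
    = Jdef ΔM (g e) := by
  unfold Jdef
  rw [map_add, map_sub, map_lcomm, map_lT g g g ΔE t g 0 ΔM S.gg', map_rT g g g ΔE t g 0 ΔM S.gg']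
  simp only [S.tt, S.gt, S.tg, S.gg, map_add, map_neg, LinearMap.add_apply, LinearMap.sub_apply,
    LinearMap.comp_apply, LinearEquiv.coe_coe, rTensor_zero, lTensor_zero, LinearMap.zero_apply,
    map_zero]
  abel

lemma Spl.tR'
    (S : Spl lam ΔC RC ΔM RM ΔE RE t g h ρ φ)
    : t ∘ₗ RE = RC ∘ₗ t + φ ∘ₗ g := LinearMap.ext S.tR
lemma Spl.gR'
    (S : Spl lam ΔC RC ΔM RM ΔE RE t g h ρ φ)
    : g ∘ₗ RE = RM ∘ₗ g := LinearMap.ext S.gR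

lemma Spl.D_tt
    (S : Spl lam ΔC RC ΔM RM ΔE RE t g h ρ φ)
    (e : E) : TensorProduct.map t t (Ddef lam ΔE RE e) = Ddef lam ΔC RC (t e) +
    ((TensorProduct.map φ RC ∘ₗ ρ
      - TensorProduct.map RC φ ∘ₗ (TensorProduct.comm k M C).toLinearMap ∘ₗ ρ
      - TensorProduct.map φ (LinearMap.id : C →ₗ[k] C) ∘ₗ ρ ∘ₗ RM
      + lTensor C φ ∘ₗ (TensorProduct.comm k M C).toLinearMap ∘ₗ ρ ∘ₗ RM
      + TensorProduct.map φ φ ∘ₗ ΔM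
      - (lTensor C RC + rTensor C RC
          + lam • (LinearMap.id : C ⊗[k] C →ₗ[k] C ⊗[k] C)) ∘ₗ ΔC ∘ₗ φ) (g e)
    - ((rTensor C RC + lTensor C RC
        + lam • (LinearMap.id : C ⊗[k] C →ₗ[k] C ⊗[k] C)) ∘ₗ h ∘ₗ RM
      - TensorProduct.map RC RC ∘ₗ h) (g e)) := by
  have m1 : ∀ x, TensorProduct.map t t (TensorProduct.map RE RE x)
      = TensorProduct.map RC RC (TensorProduct.map t t x)
      + TensorProduct.map RC φ (TensorProduct.map t g x)
      + TensorProduct.map φ RC (TensorProduct.map g t x)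
      + TensorProduct.map φ φ (TensorProduct.map g g x) := by
    intro x
    simp only [TensorProduct.map_map, S.tR', TensorProduct.map_add_left, TensorProduct.map_add_right,
      LinearMap.add_apply]
    abel
  have m2 : ∀ x, TensorProduct.map t t (lTensor E RE x)
      = lTensor C RC (TensorProduct.map t t x) + lTensor C φ (TensorProduct.map t g x) := by
    intro x
    simp only [lTensor, TensorProduct.map_map, S.tR', TensorProduct.map_add_right,
      LinearMap.add_apply, LinearMap.id_comp, LinearMap.comp_id]
  have m3 : ∀ x, TensorProduct.map t t (rTensor E RE x)
      = rTensor C RC (TensorProduct.map t t x) + rTensor C φ (TensorProduct.map g t x) := by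
    intro x
    simp only [rTensor, TensorProduct.map_map, S.tR', TensorProduct.map_add_left,
      LinearMap.add_apply, LinearMap.id_comp, LinearMap.comp_id]
  have m4 : TensorProduct.map φ (LinearMap.id : C →ₗ[k] C) = rTensor C φ := rfl
  unfold Ddef
  simp only [m4, map_sub, map_add, map_smul, m1, m2, m3, S.tt, S.gt, S.tg, S.gg, S.tR, S.gR,
    map_neg, LinearMap.add_apply, LinearMap.sub_apply, LinearMap.smul_apply, LinearMap.id_apply,
    LinearMap.comp_apply, LinearEquiv.coe_coe]
  module

lemma Spl.D_gt
    (S : Spl lam ΔC RC ΔM RM ΔE RE t g h ρ φ)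
    (e : E) : TensorProduct.map g t (Ddef lam ΔE RE e) =
    (TensorProduct.map RM φ ∘ₗ ΔM + TensorProduct.map RM RC ∘ₗ ρ) (g e)
    - (lTensor M φ ∘ₗ ΔM ∘ₗ RM
      + (lTensor M RC + rTensor C RM
          + lam • (LinearMap.id : M ⊗[k] C →ₗ[k] M ⊗[k] C)) ∘ₗ ρ ∘ₗ RM) (g e) := by
  have m1 : ∀ x, TensorProduct.map g t (TensorProduct.map RE RE x)
      = TensorProduct.map RM RC (TensorProduct.map g t x)
      + TensorProduct.map RM φ (TensorProduct.map g g x) := by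
    intro x
    simp only [TensorProduct.map_map, S.tR', S.gR', TensorProduct.map_add_left,
      TensorProduct.map_add_right, LinearMap.add_apply]
  have m2 : ∀ x, TensorProduct.map g t (lTensor E RE x)
      = lTensor M RC (TensorProduct.map g t x) + lTensor M φ (TensorProduct.map g g x) := by
    intro x
    simp only [lTensor, TensorProduct.map_map, S.tR', TensorProduct.map_add_right,
      LinearMap.add_apply, LinearMap.id_comp, LinearMap.comp_id]
  have m3 : ∀ x, TensorProduct.map g t (rTensor E RE x)
      = rTensor C RM (TensorProduct.map g t x) := by
    intro x
    simp only [rTensor, TensorProduct.map_map, S.gR', TensorProduct.map_add_left,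
      LinearMap.add_apply, LinearMap.id_comp, LinearMap.comp_id]
  unfold Ddef
  simp only [map_sub, map_add, map_smul, m1, m2, m3, S.tt, S.gt, S.tg, S.gg, S.tR, S.gR,
    map_neg, LinearMap.add_apply, LinearMap.sub_apply, LinearMap.smul_apply, LinearMap.id_apply,
    LinearMap.comp_apply, LinearEquiv.coe_coe]
  module

lemma Spl.D_gg
    (S : Spl lam ΔC RC ΔM RM ΔE RE t g h ρ φ)
    (e : E) : TensorProduct.map g g (Ddef lam ΔE RE e) = Ddef lam ΔM RM (g e) := by
  unfold Ddef
  simp only [map_sub, map_add, map_smul, lTensor, rTensor, TensorProduct.map_map, S.gR',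
    LinearMap.id_comp, LinearMap.comp_id, ← S.gg, ← S.gR]

/-- forward direction -/
lemma Spl.cocycle
    (S : Spl lam ΔC RC ΔM RM ΔE RE t g h ρ φ)
    (hC : IsRBLC lam ΔC RC) (hE : IsRBLC lam ΔE RE)
    (hg : Function.Surjective g) : NA2Cocycle lam ΔC RC ΔM RM h ρ φ := by
  obtain ⟨c1, c2, c3⟩ := hC
  obtain ⟨e1, e2, e3⟩ := hE
  rw [coAnti_iff] at c1 e1
  rw [coJacobi_iff] at c2 e2
  rw [isRBO_iff] at c3 e3
  refine ⟨?_, ?_, ?_, ?_, ?_, ?_⟩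
  all_goals
    refine LinearMap.ext fun m => ?_
    obtain ⟨e, rfl⟩ := hg m
  · have := comm_map t t (ΔE e)
    rw [e1, map_neg, S.tt, map_add, c1] at this
    simp only [LinearMap.add_apply, LinearMap.comp_apply, LinearEquiv.coe_coe,
      LinearMap.zero_apply]
    rw [neg_add] at this
    rw [add_left_cancel this]
    simp
  · have := S.J_ttt e
    rw [e2, c2, map_zero, zero_add] at this
    exact sub_eq_zero.1 this.symm
  · have := S.J_gtt e
    rw [e2, map_zero] at this
    exact sub_eq_zero.1 this.symm
  · have := S.J_ggt e
    rw [e2, map_zero] at this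
    exact (sub_eq_zero.1 this.symm).symm
  · have := S.D_tt e
    rw [e3, c3, map_zero, zero_add] at this
    exact sub_eq_zero.1 this.symm
  · have := S.D_gt e
    rw [e3, map_zero] at this
    exact sub_eq_zero.1 this.symm

end

lemma joint2 {f : C →ₗ[k] E} {t : E →ₗ[k] C} {i : M →ₗ[k] E} {g : E →ₗ[k] M}
    (hid : f ∘ₗ t + i ∘ₗ g = LinearMap.id) (x y : E ⊗[k] E)
    (h1 : TensorProduct.map t t x = TensorProduct.map t t y)
    (h2 : TensorProduct.map t g x = TensorProduct.map t g y)
    (h3 : TensorProduct.map g t x = TensorProduct.map g t y)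
    (h4 : TensorProduct.map g g x = TensorProduct.map g g y) : x = y := by
  have key : ∀ z : E ⊗[k] E, z = TensorProduct.map f f (TensorProduct.map t t z)
      + TensorProduct.map f i (TensorProduct.map t g z)
      + TensorProduct.map i f (TensorProduct.map g t z)
      + TensorProduct.map i i (TensorProduct.map g g z) := by
    intro z
    have : z = TensorProduct.map (f ∘ₗ t + i ∘ₗ g) (f ∘ₗ t + i ∘ₗ g) z := by
      rw [hid]; simp
    conv_lhs => rw [this]
    simp only [TensorProduct.map_map, TensorProduct.map_add_left, TensorProduct.map_add_right,
      LinearMap.add_apply]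
    abel
  rw [key x, key y, h1, h2, h3, h4]

lemma joint3 {f : C →ₗ[k] E} {t : E →ₗ[k] C} {i : M →ₗ[k] E} {g : E →ₗ[k] M}
    (hid : f ∘ₗ t + i ∘ₗ g = LinearMap.id) (x : E ⊗[k] (E ⊗[k] E))
    (h1 : TensorProduct.map t (TensorProduct.map t t) x = 0)
    (h2 : TensorProduct.map t (TensorProduct.map t g) x = 0)
    (h3 : TensorProduct.map t (TensorProduct.map g t) x = 0)
    (h4 : TensorProduct.map t (TensorProduct.map g g) x = 0)
    (h5 : TensorProduct.map g (TensorProduct.map t t) x = 0)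
    (h6 : TensorProduct.map g (TensorProduct.map t g) x = 0)
    (h7 : TensorProduct.map g (TensorProduct.map g t) x = 0)
    (h8 : TensorProduct.map g (TensorProduct.map g g) x = 0) : x = 0 := by
  have : x = TensorProduct.map (f ∘ₗ t + i ∘ₗ g)
      (TensorProduct.map (f ∘ₗ t + i ∘ₗ g) (f ∘ₗ t + i ∘ₗ g)) x := by
    rw [hid]; simp
  rw [this]
  simp only [TensorProduct.map_comp, TensorProduct.map_add_left, TensorProduct.map_add_right,
      LinearMap.add_apply, LinearMap.comp_apply, h1, h2, h3, h4, h5, h6, h7, h8, map_zero, add_zero]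

/-- backward direction -/
lemma Spl.rblc {lam : k} {ΔC : C →ₗ[k] C ⊗[k] C} {RC : C →ₗ[k] C}
    {ΔM : M →ₗ[k] M ⊗[k] M} {RM : M →ₗ[k] M}
    {ΔE : E →ₗ[k] E ⊗[k] E} {RE : E →ₗ[k] E} {t : E →ₗ[k] C} {g : E →ₗ[k] M}
    {h : M →ₗ[k] C ⊗[k] C} {ρ : M →ₗ[k] M ⊗[k] C} {φ : M →ₗ[k] C}
    (S : Spl lam ΔC RC ΔM RM ΔE RE t g h ρ φ) {f : C →ₗ[k] E} {i : M →ₗ[k] E}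
    (hid : f ∘ₗ t + i ∘ₗ g = LinearMap.id)
    (hC : IsRBLC lam ΔC RC) (hM : IsRBLC lam ΔM RM)
    (hc : NA2Cocycle lam ΔC RC ΔM RM h ρ φ) : IsRBLC lam ΔE RE := by
  obtain ⟨c1, c2, c3⟩ := hC
  obtain ⟨m1, m2, m3⟩ := hM
  rw [coAnti_iff] at c1 m1
  rw [coJacobi_iff] at c2 m2
  rw [isRBO_iff] at c3 m3
  obtain ⟨k1, k2, k3, k4, k5, k6⟩ := hc
  have e1 : ∀ e, TensorProduct.comm k E E (ΔE e) = - ΔE e := by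
    intro e
    apply joint2 hid
    · rw [← comm_map, map_neg, S.tt, map_add, c1]
      have := LinearMap.congr_fun k1 (g e)
      simp only [LinearMap.add_apply, LinearMap.comp_apply, LinearEquiv.coe_coe,
        LinearMap.zero_apply] at this
      rw [eq_neg_of_add_eq_zero_left this]
      abel
    · rw [← comm_map, map_neg, S.tg, S.gt, neg_neg]
    · rw [← comm_map, map_neg, S.tg, S.gt, map_neg]
      simp
    · rw [← comm_map, map_neg, S.gg, m1]
  refine ⟨(coAnti_iff _).2 e1, (coJacobi_iff _).2 fun e => ?_, (isRBO_iff _ _ _).2 fun e => ?_⟩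
  · have gtt : TensorProduct.map g (TensorProduct.map t t) (Jdef ΔE e) = 0 := by
      rw [S.J_gtt, k3, sub_self]
    have ggt : TensorProduct.map g (TensorProduct.map g t) (Jdef ΔE e) = 0 := by
      rw [S.J_ggt, k4, sub_self]
    have ttg : TensorProduct.map t (TensorProduct.map t g) (Jdef ΔE e) = 0 := by
      rw [← J_cyc ΔE e1, map_cyc, gtt, map_zero, map_zero]
    have tgt : TensorProduct.map t (TensorProduct.map g t) (Jdef ΔE e) = 0 := by
      rw [← J_cyc ΔE e1, map_cyc, ttg, map_zero, map_zero]
    have gtg : TensorProduct.map g (TensorProduct.map t g) (Jdef ΔE e) = 0 := by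
      rw [← J_cyc ΔE e1, map_cyc, ggt, map_zero, map_zero]
    have tgg : TensorProduct.map t (TensorProduct.map g g) (Jdef ΔE e) = 0 := by
      rw [← J_cyc ΔE e1, map_cyc, gtg, map_zero, map_zero]
    refine joint3 hid _ ?_ ttg tgt tgg gtt gtg ggt ?_
    · rw [S.J_ttt, k2, c2, sub_self, add_zero]
    · rw [S.J_ggg, m2]
  · have gt : TensorProduct.map g t (Ddef lam ΔE RE e) = 0 := by
      rw [S.D_gt, k6, sub_self]
    apply joint2 hid
    · rw [S.D_tt, k5, c3, sub_self, add_zero, map_zero]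
    · have := comm_map g t (Ddef lam ΔE RE e)
      rw [D_comm lam ΔE RE e1, gt, map_neg, map_zero] at this
      rw [map_zero]
      exact neg_eq_zero.1 this.symm
    · rw [gt, map_zero]
    · rw [S.D_gg, m3, map_zero]

lemma prod_spl (lam : k) (ΔC : C →ₗ[k] C ⊗[k] C) (RC : C →ₗ[k] C)
    (ΔM : M →ₗ[k] M ⊗[k] M) (RM : M →ₗ[k] M)
    (h : M →ₗ[k] C ⊗[k] C) (ρ : M →ₗ[k] M ⊗[k] C) (φ : M →ₗ[k] C) :
    Spl lam ΔC RC ΔM RM (prodCobra ΔC ΔM h ρ) (prodRB RC RM φ)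
      (LinearMap.fst k C M) (LinearMap.snd k C M) h ρ φ := by
  constructor <;> intro e <;>
  simp [prodCobra, prodRB, TensorProduct.map_map]

end Helpers

section ExtHelpers

/-- splitting data of an extension -/
def XSpl (X : NAExt k C M lam ΔC RC ΔM RM) (t : X.E →ₗ[k] C)
    (h : M →ₗ[k] C ⊗[k] C) (ρ : M →ₗ[k] M ⊗[k] C) (φ : M →ₗ[k] C) : Prop :=
  t ∘ₗ X.f = LinearMap.id ∧ Spl lam ΔC RC ΔM RM X.ΔE X.RE t X.g h ρ φ

lemma X_gf (X : NAExt k C M lam ΔC RC ΔM RM) (c : C) : X.g (X.f c) = 0 := by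
  have : X.f c ∈ LinearMap.ker X.g := X.exact ▸ LinearMap.mem_range_self X.f c
  exact this

lemma X_descend {V : Type*} [AddCommGroup V] [Module k V] (X : NAExt k C M lam ΔC RC ΔM RM)
    (F : X.E →ₗ[k] V) (hF : ∀ c, F (X.f c) = 0) : ∃ G : M →ₗ[k] V, G ∘ₗ X.g = F := by
  obtain ⟨j, hj⟩ := X.g.exists_rightInverse_of_surjective (LinearMap.range_eq_top.2 X.surjg)
  refine ⟨F ∘ₗ j, LinearMap.ext fun e => ?_⟩
  have h1 : e - j (X.g e) ∈ LinearMap.range X.f := by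
    rw [X.exact, LinearMap.mem_ker, map_sub]
    have := LinearMap.congr_fun hj (X.g e)
    simp only [LinearMap.comp_apply, LinearMap.id_apply] at this
    rw [this, sub_self]
  obtain ⟨c, hc⟩ := h1
  have h2 := hF c
  rw [hc, map_sub, sub_eq_zero] at h2
  simp [h2]

lemma X_section (X : NAExt k C M lam ΔC RC ΔM RM) (t : X.E →ₗ[k] C)
    (ht : t ∘ₗ X.f = LinearMap.id) :
    ∃ i : M →ₗ[k] X.E, X.g ∘ₗ i = LinearMap.id ∧ t ∘ₗ i = 0 ∧
      X.f ∘ₗ t + i ∘ₗ X.g = LinearMap.id := by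
  have ht' : ∀ c, t (X.f c) = c := LinearMap.congr_fun ht
  obtain ⟨i, hi⟩ := X_descend X (LinearMap.id - X.f ∘ₗ t) (by intro c; simp [ht'])
  have hi' := LinearMap.congr_fun hi
  simp only [LinearMap.comp_apply, LinearMap.sub_apply, LinearMap.id_apply] at hi'
  refine ⟨i, LinearMap.ext fun m => ?_, LinearMap.ext fun m => ?_, LinearMap.ext fun e => ?_⟩
  · obtain ⟨e, rfl⟩ := X.surjg m
    simp [hi', X_gf]
  · obtain ⟨e, rfl⟩ := X.surjg m
    simp [hi', ht']
  · simp [hi']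

lemma X_spl (X : NAExt k C M lam ΔC RC ΔM RM) (t : X.E →ₗ[k] C)
    (ht : t ∘ₗ X.f = LinearMap.id) (h : M →ₗ[k] C ⊗[k] C) (ρ : M →ₗ[k] M ⊗[k] C) (φ : M →ₗ[k] C)
    (h1 : h ∘ₗ X.g = TensorProduct.map t t ∘ₗ X.ΔE - ΔC ∘ₗ t)
    (h2 : ρ ∘ₗ X.g = TensorProduct.map X.g t ∘ₗ X.ΔE)
    (h3 : φ ∘ₗ X.g = t ∘ₗ X.RE - RC ∘ₗ t) : XSpl X t h ρ φ := by
  have h1 := LinearMap.congr_fun h1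
  have h2 := LinearMap.congr_fun h2
  have h3 := LinearMap.congr_fun h3
  simp only [LinearMap.comp_apply, LinearMap.sub_apply] at h1 h2 h3
  refine ⟨ht, ?_, ?_, ?_, ?_, ?_, ?_⟩
  · intro e; rw [h1]; abel
  · intro e; rw [h2]
  · intro e
    have := comm_map X.g t (X.ΔE e)
    rw [(coAnti_iff _).1 X.rblc.1, ← h2, map_neg] at this
    rw [this, neg_neg]
  · exact fun e => LinearMap.congr_fun X.homg.1 e
  · intro e; rw [h3]; abel
  · exact fun e => (LinearMap.congr_fun X.homg.2 e).symm

lemma X_exists (X : NAExt k C M lam ΔC RC ΔM RM) :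
    ∃ (t : X.E →ₗ[k] C) (h : M →ₗ[k] C ⊗[k] C) (ρ : M →ₗ[k] M ⊗[k] C) (φ : M →ₗ[k] C),
      XSpl X t h ρ φ := by
  obtain ⟨t, ht⟩ := X.f.exists_leftInverse_of_injective (LinearMap.ker_eq_bot.2 X.injf)
  have ht' : ∀ c, t (X.f c) = c := LinearMap.congr_fun ht
  have hg0 : X.g ∘ₗ X.f = 0 := LinearMap.ext (X_gf X)
  have hΔ : ∀ c, X.ΔE (X.f c) = TensorProduct.map X.f X.f (ΔC c) :=
    fun c => (LinearMap.congr_fun X.homf.1 c).symm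
  have hR : ∀ c, X.RE (X.f c) = X.f (RC c) := fun c => LinearMap.congr_fun X.homf.2 c
  obtain ⟨h, h1⟩ := X_descend X (TensorProduct.map t t ∘ₗ X.ΔE - ΔC ∘ₗ t) (by
    intro c
    simp [hΔ, TensorProduct.map_map, ht, ht'])
  obtain ⟨ρ, h2⟩ := X_descend X (TensorProduct.map X.g t ∘ₗ X.ΔE) (by
    intro c
    simp [hΔ, TensorProduct.map_map, hg0])
  obtain ⟨φ, h3⟩ := X_descend X (t ∘ₗ X.RE - RC ∘ₗ t) (by
    intro c
    simp [hR, ht'])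
  exact ⟨t, h, ρ, φ, X_spl X t ht h ρ φ h1 h2 h3⟩

lemma X_exists' (hC : IsRBLC lam ΔC RC) (X : NAExt k C M lam ΔC RC ΔM RM) :
    ∃ (c : Cocycle k C M lam ΔC RC ΔM RM) (t : X.E →ₗ[k] C), XSpl X t c.1.1 c.1.2.1 c.1.2.2 := by
  obtain ⟨t, h, ρ, φ, S⟩ := X_exists X
  exact ⟨⟨(h, ρ, φ), S.2.cocycle hC X.rblc X.surjg⟩, t, S⟩

/-- equivalent extensions induce equivalent cocycles -/
lemma ext_to_coc {X Y : NAExt k C M lam ΔC RC ΔM RM} (hXY : NAExtRel X Y)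
    {t : X.E →ₗ[k] C} {h : M →ₗ[k] C ⊗[k] C} {ρ : M →ₗ[k] M ⊗[k] C} {φ : M →ₗ[k] C}
    {t' : Y.E →ₗ[k] C} {h' : M →ₗ[k] C ⊗[k] C} {ρ' : M →ₗ[k] M ⊗[k] C} {φ' : M →ₗ[k] C}
    (SX : XSpl X t h ρ φ) (SY : XSpl Y t' h' ρ' φ') :
    CocEquiv ΔC RC ΔM RM h ρ φ h' ρ' φ' := by
  obtain ⟨θ, ⟨hθ1, hθ2⟩, -, hθ3, hθ4⟩ := hXY
  obtain ⟨ht, S⟩ := SX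
  obtain ⟨ht', S'⟩ := SY
  obtain ⟨s, hs⟩ := X_descend X (t' ∘ₗ θ - t) (by
    intro c
    have a1 := LinearMap.congr_fun ht c
    have a2 := LinearMap.congr_fun ht' c
    rw [← hθ3] at a2
    simp only [LinearMap.comp_apply, LinearMap.id_apply, LinearMap.sub_apply] at a1 a2 ⊢
    rw [a1, a2, sub_self])
  have hs1 : t' ∘ₗ θ = t + s ∘ₗ X.g := by rw [hs]; abel
  have hs2 : ∀ e, t' (θ e) = t e + s (X.g e) := LinearMap.congr_fun hs1
  have hg : ∀ e, Y.g (θ e) = X.g e := LinearMap.congr_fun hθ4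
  have hΔ : ∀ e, Y.ΔE (θ e) = TensorProduct.map θ θ (X.ΔE e) :=
    fun e => (LinearMap.congr_fun hθ1 e).symm
  have hR : ∀ e, Y.RE (θ e) = θ (X.RE e) := LinearMap.congr_fun hθ2
  refine ⟨s, LinearMap.ext fun m => ?_, LinearMap.ext fun m => ?_, LinearMap.ext fun m => ?_⟩
  all_goals obtain ⟨e, rfl⟩ := X.surjg m
  · have a := S'.tt (θ e)
    have b : ∀ x, TensorProduct.map t t x + TensorProduct.map t (s ∘ₗ X.g) x
        + TensorProduct.map (s ∘ₗ X.g) t x + TensorProduct.map (s ∘ₗ X.g) (s ∘ₗ X.g) x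
      = TensorProduct.map t t x + lTensor C s (TensorProduct.map t X.g x)
        + rTensor C s (TensorProduct.map X.g t x)
        + TensorProduct.map s s (TensorProduct.map X.g X.g x) := by
      intro x
      simp only [lTensor, rTensor, TensorProduct.map_map, LinearMap.id_comp]
    rw [hΔ, TensorProduct.map_map, hs1, TensorProduct.map_add_left, TensorProduct.map_add_right,
      TensorProduct.map_add_right, LinearMap.add_apply, LinearMap.add_apply, LinearMap.add_apply,
      ← add_assoc, b, S.tt, S.tg, S.gt, S.gg, hs2, hg, map_add, map_neg] at a
    have d : TensorProduct.comm k C C (rTensor C s (ρ (X.g e)))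
        = lTensor C s (TensorProduct.comm k M C (ρ (X.g e))) := comm_map _ _ _
    change _ = (rTensor C s ∘ₗ ρ - (TensorProduct.comm k C C).toLinearMap ∘ₗ rTensor C s ∘ₗ ρ
      + TensorProduct.map s s ∘ₗ ΔM - ΔC ∘ₗ s) (X.g e)
    simp only [LinearMap.add_apply, LinearMap.sub_apply, LinearMap.comp_apply,
      LinearEquiv.coe_coe, d]
    rw [add_assoc, add_comm, ← sub_eq_iff_eq_add] at a
    rw [← sub_eq_zero] at a ⊢
    rw [← neg_eq_zero, ← a]
    abel
  · have a := S'.gt (θ e)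
    have b : ∀ x, TensorProduct.map X.g t x + TensorProduct.map X.g (s ∘ₗ X.g) x
      = TensorProduct.map X.g t x + lTensor M s (TensorProduct.map X.g X.g x) := by
      intro x
      simp only [lTensor, TensorProduct.map_map, LinearMap.id_comp]
    rw [hΔ, TensorProduct.map_map, hs1, hθ4, TensorProduct.map_add_right, LinearMap.add_apply,
      b, S.gt, S.gg, hg] at a
    simp only [LinearMap.sub_apply, LinearMap.comp_apply, ← a]
    abel
  · have a := S'.tR (θ e)
    rw [hR, hs2, hs2, hg, S.tR, S.gR, map_add] at a
    simp only [LinearMap.sub_apply, LinearMap.comp_apply]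
    rw [← sub_eq_zero] at a ⊢
    rw [← neg_eq_zero, ← a]
    abel

/-- equivalent cocycles come from equivalent extensions -/
lemma coc_to_ext {X Y : NAExt k C M lam ΔC RC ΔM RM}
    {t : X.E →ₗ[k] C} {h : M →ₗ[k] C ⊗[k] C} {ρ : M →ₗ[k] M ⊗[k] C} {φ : M →ₗ[k] C}
    {t' : Y.E →ₗ[k] C} {h' : M →ₗ[k] C ⊗[k] C} {ρ' : M →ₗ[k] M ⊗[k] C} {φ' : M →ₗ[k] C}
    (SX : XSpl X t h ρ φ) (SY : XSpl Y t' h' ρ' φ')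
    (hc : CocEquiv ΔC RC ΔM RM h ρ φ h' ρ' φ') : NAExtRel X Y := by
  obtain ⟨s, r1, r2, r3⟩ := hc
  obtain ⟨ht, S⟩ := SX
  obtain ⟨ht', S'⟩ := SY
  obtain ⟨i, gi, ti, hid⟩ := X_section X t ht
  obtain ⟨i', gi', ti', hid'⟩ := X_section Y t' ht'
  obtain ⟨θ, hθ⟩ : ∃ θ : X.E →ₗ[k] Y.E, θ = Y.f ∘ₗ (t + s ∘ₗ X.g) + i' ∘ₗ X.g := ⟨_, rfl⟩
  have pf : ∀ c, t (X.f c) = c := LinearMap.congr_fun ht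
  have pf' : ∀ c, t' (Y.f c) = c := LinearMap.congr_fun ht'
  have pgi : ∀ c, X.g (i c) = c := LinearMap.congr_fun gi
  have pgi' : ∀ c, Y.g (i' c) = c := LinearMap.congr_fun gi'
  have pti : ∀ c, t (i c) = 0 := LinearMap.congr_fun ti
  have pti' : ∀ c, t' (i' c) = 0 := LinearMap.congr_fun ti'
  have pid : ∀ e, X.f (t e) + i (X.g e) = e := LinearMap.congr_fun hid
  have pid' : ∀ e, Y.f (t' e) + i' (Y.g e) = e := LinearMap.congr_fun hid'
  have hs1 : t' ∘ₗ θ = t + s ∘ₗ X.g := by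
    ext e; simp [hθ, pf', pti']
  have hg1 : Y.g ∘ₗ θ = X.g := by
    ext e; simp [hθ, pgi', X_gf]
  have hs2 : ∀ e, t' (θ e) = t e + s (X.g e) := LinearMap.congr_fun hs1
  have hg2 : ∀ e, Y.g (θ e) = X.g e := LinearMap.congr_fun hg1
  have r1 := LinearMap.congr_fun r1
  have r2 := LinearMap.congr_fun r2
  have r3 := LinearMap.congr_fun r3
  change ∀ x, _ = (rTensor C s ∘ₗ ρ - (TensorProduct.comm k C C).toLinearMap ∘ₗ rTensor C s ∘ₗ ρ
      + TensorProduct.map s s ∘ₗ ΔM - ΔC ∘ₗ s) x at r1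
  simp only [LinearMap.add_apply, LinearMap.sub_apply, LinearMap.comp_apply,
      LinearEquiv.coe_coe, sub_eq_iff_eq_add] at r1 r2 r3
  have inj : ∀ x y : Y.E, t' x = t' y → Y.g x = Y.g y → x = y := by
    intro x y h1 h2
    rw [← pid' x, ← pid' y, h1, h2]
  refine ⟨θ, ⟨LinearMap.ext fun e => ?_, LinearMap.ext fun e => ?_⟩, ⟨?_, ?_⟩, ?_, hg1⟩
  · have b1 : ∀ x, TensorProduct.map t' t' (TensorProduct.map θ θ x)
      = TensorProduct.map t t x + lTensor C s (TensorProduct.map t X.g x)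
        + rTensor C s (TensorProduct.map X.g t x)
        + TensorProduct.map s s (TensorProduct.map X.g X.g x) := by
      intro x
      simp only [lTensor, rTensor, TensorProduct.map_map, LinearMap.id_comp, hs1,
        TensorProduct.map_add_left, TensorProduct.map_add_right, LinearMap.add_apply]
      abel
    have b2 : ∀ x, TensorProduct.map Y.g t' (TensorProduct.map θ θ x)
      = TensorProduct.map X.g t x + lTensor M s (TensorProduct.map X.g X.g x) := by
      intro x
      simp only [lTensor, TensorProduct.map_map, LinearMap.id_comp, hs1, hg1,
        TensorProduct.map_add_right, LinearMap.add_apply]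
    have d : TensorProduct.comm k C C (rTensor C s (ρ (X.g e)))
        = lTensor C s (TensorProduct.comm k M C (ρ (X.g e))) := comm_map _ _ _
    have gt : TensorProduct.map Y.g t' (TensorProduct.map θ θ (X.ΔE e))
        = TensorProduct.map Y.g t' (Y.ΔE (θ e)) := by
      rw [b2, S'.gt, hg2, S.gt, S.gg, r2]
      abel
    simp only [LinearMap.comp_apply]
    apply joint2 hid'
    · rw [b1, S'.tt, hg2, hs2, S.tt, S.tg, S.gt, S.gg, r1, d, map_add, map_neg]
      abel
    · have a1 := comm_map Y.g t' (TensorProduct.map θ θ (X.ΔE e))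
      have a2 := comm_map Y.g t' (Y.ΔE (θ e))
      rw [comm_map θ θ, (coAnti_iff _).1 X.rblc.1, gt] at a1
      rw [(coAnti_iff _).1 Y.rblc.1] at a2
      have a3 := a1.symm.trans a2
      simpa only [map_neg, neg_inj] using a3
    · exact gt
    · rw [TensorProduct.map_map, hg1, S.gg, S'.gg, hg2]
  · simp only [LinearMap.comp_apply]
    apply inj
    · rw [S'.tR, hs2, hs2, hg2, S.tR, S.gR, r3, map_add]
      abel
    · rw [S'.gR, hg2, hg2, S.gR]
  · intro x y hxy
    have h1 : X.g x = X.g y := by rw [← hg2, ← hg2, hxy]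
    have h2 : t x = t y := by
      have := congrArg t' hxy
      rw [hs2, hs2, h1] at this
      exact add_right_cancel this
    rw [← pid x, ← pid y, h1, h2]
  · intro y
    refine ⟨X.f (t' y - s (Y.g y)) + i (Y.g y), inj _ _ ?_ ?_⟩
    · rw [hs2, map_add, map_add, pf, pti, X_gf, pgi]
      simp
    · rw [hg2, map_add, X_gf, pgi, zero_add]
  · ext c
    simp [hθ, pf, X_gf]

/-- the extension attached to a cocycle -/
noncomputable def prodExt (hC : IsRBLC lam ΔC RC) (hM : IsRBLC lam ΔM RM)
    (c : Cocycle k C M lam ΔC RC ΔM RM) : NAExt k C M lam ΔC RC ΔM RM where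
  E := C × M
  ΔE := prodCobra ΔC ΔM c.1.1 c.1.2.1
  RE := prodRB RC RM c.1.2.2
  rblc := (prod_spl lam ΔC RC ΔM RM c.1.1 c.1.2.1 c.1.2.2).rblc (f := LinearMap.inl k C M)
    (i := LinearMap.inr k C M) (by ext <;> simp) hC hM c.2
  f := LinearMap.inl k C M
  g := LinearMap.snd k C M
  homf := by
    constructor
    · ext c; simp [prodCobra]
    · ext c <;> simp [prodRB]
  homg := by
    constructor
    · exact LinearMap.ext (prod_spl lam ΔC RC ΔM RM c.1.1 c.1.2.1 c.1.2.2).gg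
    · exact (LinearMap.ext (prod_spl lam ΔC RC ΔM RM c.1.1 c.1.2.1 c.1.2.2).gR).symm
  injf := LinearMap.inl_injective
  surjg := LinearMap.snd_surjective
  exact := LinearMap.range_inl k C M

lemma prodExt_spl (hC : IsRBLC lam ΔC RC) (hM : IsRBLC lam ΔM RM)
    (c : Cocycle k C M lam ΔC RC ΔM RM) :
    XSpl (prodExt hC hM c) (LinearMap.fst k C M) c.1.1 c.1.2.1 c.1.2.2 :=
  ⟨LinearMap.fst_comp_inl k C M, prod_spl lam ΔC RC ΔM RM c.1.1 c.1.2.1 c.1.2.2⟩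

lemma ext_refl (X : NAExt k C M lam ΔC RC ΔM RM) : NAExtRel X X :=
  ⟨LinearMap.id, ⟨by simp, by simp⟩, Function.bijective_id, by simp, by simp⟩

end ExtHelpers

theorem stmt9 (hC : IsRBLC lam ΔC RC) (hM : IsRBLC lam ΔM RM) :
    ∃ Φ : Quot (NAExtRel (k := k) (C := C) (M := M) (lam := lam)
            (ΔC := ΔC) (RC := RC) (ΔM := ΔM) (RM := RM)) →
          Quot (CocycleRel (k := k) (C := C) (M := M) (lam := lam)
            (ΔC := ΔC) (RC := RC) (ΔM := ΔM) (RM := RM)),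
      Function.Bijective Φ ∧
      -- `Φ` sends the class of an extension to the class of the non-abelian
      -- 2-cocycle induced by any retraction of it:
      (∀ (X : NAExt k C M lam ΔC RC ΔM RM) (t : X.E →ₗ[k] C),
        t ∘ₗ X.f = LinearMap.id →
        ∀ (h : M →ₗ[k] C ⊗[k] C) (ρ : M →ₗ[k] M ⊗[k] C) (φ : M →ₗ[k] C)
          (hcoc : NA2Cocycle lam ΔC RC ΔM RM h ρ φ),
          h ∘ₗ X.g = TensorProduct.map t t ∘ₗ X.ΔE - ΔC ∘ₗ t →
          ρ ∘ₗ X.g = TensorProduct.map X.g t ∘ₗ X.ΔE →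
          φ ∘ₗ X.g = t ∘ₗ X.RE - RC ∘ₗ t →
          Φ (Quot.mk _ X) = Quot.mk _ ⟨(h, ρ, φ), hcoc⟩) := by
  choose c t hct using fun X => X_exists' (k := k) (C := C) (M := M) (lam := lam)
    (ΔC := ΔC) (RC := RC) (ΔM := ΔM) (RM := RM) hC X
  let Φ : Quot (NAExtRel (k := k) (C := C) (M := M) (lam := lam)
            (ΔC := ΔC) (RC := RC) (ΔM := ΔM) (RM := RM)) →
          Quot (CocycleRel (k := k) (C := C) (M := M) (lam := lam)
            (ΔC := ΔC) (RC := RC) (ΔM := ΔM) (RM := RM)) :=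
    Quot.lift (fun X => Quot.mk _ (c X))
      (fun X Y hXY => Quot.sound (ext_to_coc hXY (hct X) (hct Y)))
  let Ψ : Quot (CocycleRel (k := k) (C := C) (M := M) (lam := lam)
            (ΔC := ΔC) (RC := RC) (ΔM := ΔM) (RM := RM)) →
          Quot (NAExtRel (k := k) (C := C) (M := M) (lam := lam)
            (ΔC := ΔC) (RC := RC) (ΔM := ΔM) (RM := RM)) :=
    Quot.lift (fun x => Quot.mk _ (prodExt hC hM x))
      (fun x y hxy => Quot.sound (coc_to_ext (prodExt_spl hC hM x) (prodExt_spl hC hM y) hxy))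
  refine ⟨Φ, Function.bijective_iff_has_inverse.2 ⟨Ψ, ?_, ?_⟩, ?_⟩
  · rintro ⟨X⟩
    exact Quot.sound (coc_to_ext (prodExt_spl hC hM (c X)) (hct X)
      (ext_to_coc (ext_refl X) (hct X) (hct X)))
  · rintro ⟨x⟩
    exact Quot.sound (ext_to_coc (ext_refl _) (hct (prodExt hC hM x)) (prodExt_spl hC hM x))
  · intro X t' ht' h ρ φ hcoc h1 h2 h3
    exact Quot.sound (ext_to_coc (ext_refl X) (hct X) (X_spl X t' ht' h ρ φ h1 h2 h3))

end
end

section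
/- Let 0 → C →f E →g M → 0 be a non-abelian extension of λ-weighted Rota-Baxter Lie coalgebras with retraction t, and let (h, ρ, φ) = (h_t, ρ_t, φ_t) be the induced non-abelian 2-cocycle. Then the map θ : E → C⊕M defined by θ(e) = t(e) + g(e) is an isomorphism of λ-weighted Rota-Baxter Lie coalgebras from (E, Δ_E, R_E) onto (C⊕M, Δ_{(h,ρ)}, R_φ) satisfying θf = i_C and π_M θ = g, where i_C is the canonical injection and π_M the canonical projection; hence the extension is equivalent to the extension 0 → C →i_C C⊕M →π_M M → 0. -/
open TensorProduct LinearMap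

section

variable {k : Type*} [Field k]
variable {C : Type*} [AddCommGroup C] [Module k C]
variable {M : Type*} [AddCommGroup M] [Module k M]
variable {E : Type*} [AddCommGroup E] [Module k E]

theorem stmt10 (lam : k) (ΔC : C →ₗ[k] C ⊗[k] C) (RC : C →ₗ[k] C)
    (ΔM : M →ₗ[k] M ⊗[k] M) (RM : M →ₗ[k] M)
    (ΔE : E →ₗ[k] E ⊗[k] E) (RE : E →ₗ[k] E)
    (hC : IsRBLC lam ΔC RC) (hM : IsRBLC lam ΔM RM) (hE : IsRBLC lam ΔE RE)
    (f : C →ₗ[k] E) (g : E →ₗ[k] M)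
    (homf : IsHom ΔC RC ΔE RE f) (homg : IsHom ΔE RE ΔM RM g)
    (injf : Function.Injective f) (surjg : Function.Surjective g)
    (hexact : LinearMap.range f = LinearMap.ker g)
    (t : E →ₗ[k] C) (ht : t ∘ₗ f = LinearMap.id)
    (h : M →ₗ[k] C ⊗[k] C) (ρ : M →ₗ[k] M ⊗[k] C) (φ : M →ₗ[k] C)
    (hh : h ∘ₗ g = TensorProduct.map t t ∘ₗ ΔE - ΔC ∘ₗ t)
    (hρ : ρ ∘ₗ g = TensorProduct.map g t ∘ₗ ΔE)
    (hφ : φ ∘ₗ g = t ∘ₗ RE - RC ∘ₗ t) :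
    -- `θ = (t, g) : E → C ⊕ M` is an isomorphism of `λ`-weighted Rota-Baxter Lie
    -- coalgebras onto `(C ⊕ M, Δ_{(h,ρ)}, R_φ)` ...
    IsHom ΔE RE (prodCobra ΔC ΔM h ρ) (prodRB RC RM φ) (LinearMap.prod t g) ∧
    Function.Bijective (LinearMap.prod t g) ∧
    -- ... intertwining the two extensions: `θ ∘ f = i_C` and `π_M ∘ θ = g`.
    (LinearMap.prod t g) ∘ₗ f = LinearMap.inl k C M ∧
    LinearMap.snd k C M ∘ₗ (LinearMap.prod t g) = g := by
  obtain ⟨hg1, hg2⟩ := homg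
  have hanti : ΔE = -((TensorProduct.comm k E E).toLinearMap ∘ₗ ΔE) := hE.1
  have hθ : LinearMap.prod t g
      = LinearMap.inl k C M ∘ₗ t + LinearMap.inr k C M ∘ₗ g := by
    ext e <;> simp
  have htf : ∀ c, t (f c) = c := fun c => LinearMap.congr_fun ht c
  have hgf : ∀ c, g (f c) = 0 := fun c => by
    have : f c ∈ LinearMap.ker g := hexact ▸ LinearMap.mem_range_self f c
    exact this
  have hτ : (TensorProduct.comm k M C).toLinearMap ∘ₗ ρ ∘ₗ g
      = -(TensorProduct.map t g ∘ₗ ΔE) := by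
    have hcomm : (TensorProduct.comm k M C).toLinearMap ∘ₗ TensorProduct.map g t
        = TensorProduct.map t g ∘ₗ (TensorProduct.comm k E E).toLinearMap := by
      ext x y
      simp
    rw [hρ, ← LinearMap.comp_assoc, hcomm, LinearMap.comp_assoc]
    conv_rhs => rw [hanti]
    rw [LinearMap.comp_neg, neg_neg]
  refine ⟨⟨?_, ?_⟩, ⟨?_, ?_⟩, ?_, ?_⟩
  · have e1 : ∀ e, h (g e) = TensorProduct.map t t (ΔE e) - ΔC (t e) :=
      fun e => LinearMap.congr_fun hh e
    have e2 : ∀ e, ρ (g e) = TensorProduct.map g t (ΔE e) :=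
      fun e => LinearMap.congr_fun hρ e
    have e3 : ∀ e, TensorProduct.comm k M C (ρ (g e)) = -(TensorProduct.map t g (ΔE e)) :=
      fun e => LinearMap.congr_fun hτ e
    have e4 : ∀ e, ΔM (g e) = TensorProduct.map g g (ΔE e) :=
      fun e => (LinearMap.congr_fun hg1 e).symm
    ext1 e
    have key : prodCobra ΔC ΔM h ρ (LinearMap.prod t g e)
        = TensorProduct.map (LinearMap.inl k C M) (LinearMap.inl k C M) (ΔC (t e) + h (g e))
          + TensorProduct.map (LinearMap.inr k C M) (LinearMap.inr k C M) (ΔM (g e))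
          + TensorProduct.map (LinearMap.inr k C M) (LinearMap.inl k C M) (ρ (g e))
          - TensorProduct.map (LinearMap.inl k C M) (LinearMap.inr k C M)
              (TensorProduct.comm k M C (ρ (g e))) := rfl
    rw [LinearMap.comp_apply, LinearMap.comp_apply, key, e3, e1, e2, e4, hθ,
      add_sub_cancel, map_neg, sub_neg_eq_add, TensorProduct.map_add_left,
      TensorProduct.map_add_right, TensorProduct.map_add_right]
    simp only [TensorProduct.map_comp, LinearMap.add_apply, LinearMap.comp_apply]
    abel
  · ext1 e
    have e1 : φ (g e) = t (RE e) - RC (t e) := LinearMap.congr_fun hφ e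
    have e2 : RM (g e) = g (RE e) := LinearMap.congr_fun hg2 e
    simp [prodRB, e1, e2]
  · rw [injective_iff_map_eq_zero]
    intro e he
    have h1 : t e = 0 := congrArg Prod.fst he
    have h2 : g e = 0 := congrArg Prod.snd he
    have h3 : e ∈ LinearMap.range f := hexact ▸ (LinearMap.mem_ker.mpr h2)
    obtain ⟨c, rfl⟩ := h3
    rw [htf] at h1
    rw [h1, map_zero]
  · rintro ⟨c, m⟩
    obtain ⟨e, rfl⟩ := surjg m
    refine ⟨e + f (c - t e), ?_⟩
    have h1 : t (e + f (c - t e)) = c := by rw [map_add, htf]; abel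
    have h2 : g (e + f (c - t e)) = g e := by rw [map_add, hgf, add_zero]
    exact Prod.ext h1 h2
  · ext1 c
    exact Prod.ext (htf c) (hgf c)
  · rfl

end
end

section
/- Let E₁ and E₂ be two equivalent non-abelian extensions of the λ-weighted Rota-Baxter Lie coalgebra (C, Δ_C, R_C) by (M, Δ_M, R_M), and let (α, β) ∈ Aut(C)×Aut(M) be a pair of λ-weighted Rota-Baxter Lie coalgebra automorphisms. Then (α, β) is extensible with respect to E₁ if and only if (α, β) is extensible with respect to E₂. -/
open TensorProduct LinearMap

section

variable {k : Type*} [Field k]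
variable {C : Type*} [AddCommGroup C] [Module k C]
variable {M : Type*} [AddCommGroup M] [Module k M]
variable {E : Type*} [AddCommGroup E] [Module k E]

theorem isHom_comp_aux {A B D : Type*} [AddCommGroup A] [Module k A] [AddCommGroup B] [Module k B]
    [AddCommGroup D] [Module k D]
    {ΔA : A →ₗ[k] A ⊗[k] A} {RA : A →ₗ[k] A} {ΔB : B →ₗ[k] B ⊗[k] B} {RB : B →ₗ[k] B}
    {ΔD : D →ₗ[k] D ⊗[k] D} {RD : D →ₗ[k] D} {p : A →ₗ[k] B} {q : B →ₗ[k] D}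
    (hq : IsHom ΔB RB ΔD RD q) (hp : IsHom ΔA RA ΔB RB p) :
    IsHom ΔA RA ΔD RD (q ∘ₗ p) := by
  refine ⟨?_, ?_⟩
  · rw [TensorProduct.map_comp, LinearMap.comp_assoc, hp.1, ← LinearMap.comp_assoc, hq.1,
      LinearMap.comp_assoc]
  · rw [← LinearMap.comp_assoc, hq.2, LinearMap.comp_assoc, hp.2, LinearMap.comp_assoc]

theorem isHom_inv_aux {A B : Type*} [AddCommGroup A] [Module k A] [AddCommGroup B] [Module k B]
    {ΔA : A →ₗ[k] A ⊗[k] A} {RA : A →ₗ[k] A} {ΔB : B →ₗ[k] B ⊗[k] B} {RB : B →ₗ[k] B}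
    {p : A →ₗ[k] B} {q : B →ₗ[k] A} (hp : IsHom ΔA RA ΔB RB p)
    (hqp : q ∘ₗ p = LinearMap.id) (hpq : p ∘ₗ q = LinearMap.id) :
    IsHom ΔB RB ΔA RA q := by
  refine ⟨?_, ?_⟩
  · calc TensorProduct.map q q ∘ₗ ΔB = TensorProduct.map q q ∘ₗ (ΔB ∘ₗ p) ∘ₗ q := by
          rw [LinearMap.comp_assoc, hpq, LinearMap.comp_id]
      _ = TensorProduct.map (q ∘ₗ p) (q ∘ₗ p) ∘ₗ ΔA ∘ₗ q := by
          rw [← hp.1, TensorProduct.map_comp]; simp only [LinearMap.comp_assoc]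
      _ = ΔA ∘ₗ q := by rw [hqp, TensorProduct.map_id, LinearMap.id_comp]
  · calc RA ∘ₗ q = (q ∘ₗ p) ∘ₗ RA ∘ₗ q := by rw [hqp, LinearMap.id_comp]
      _ = q ∘ₗ (p ∘ₗ RA) ∘ₗ q := by simp only [LinearMap.comp_assoc]
      _ = q ∘ₗ RB := by
          rw [← hp.2, LinearMap.comp_assoc, hpq, LinearMap.comp_id]

theorem extensible_transfer_aux {A B : Type*} [AddCommGroup A] [Module k A]
    [AddCommGroup B] [Module k B]
    {ΔA : A →ₗ[k] A ⊗[k] A} {RA : A →ₗ[k] A} {ΔB : B →ₗ[k] B ⊗[k] B} {RB : B →ₗ[k] B}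
    {f₁ : C →ₗ[k] A} {g₁ : A →ₗ[k] M} {f₂ : C →ₗ[k] B} {g₂ : B →ₗ[k] M}
    {p : A →ₗ[k] B} {q : B →ₗ[k] A} (hp : IsHom ΔA RA ΔB RB p) (hq : IsHom ΔB RB ΔA RA q)
    (hqp : q ∘ₗ p = LinearMap.id) (hpq : p ∘ₗ q = LinearMap.id)
    (hf : p ∘ₗ f₁ = f₂) (hg : g₂ ∘ₗ p = g₁) {α : C →ₗ[k] C} {β : M →ₗ[k] M}
    (h : Extensible ΔA RA f₁ g₁ α β) : Extensible ΔB RB f₂ g₂ α β := by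
  obtain ⟨γ, hγ, bγ, mγ, h1, h2⟩ := h
  have e1 : ∀ x, q (p x) = x := fun x => LinearMap.congr_fun hqp x
  have e2 : ∀ x, p (q x) = x := fun x => LinearMap.congr_fun hpq x
  have bp : Function.Bijective p := Function.bijective_iff_has_inverse.2 ⟨q, e1, e2⟩
  have bq : Function.Bijective q := Function.bijective_iff_has_inverse.2 ⟨p, e2, e1⟩
  subst hf hg
  refine ⟨p ∘ₗ γ ∘ₗ q, isHom_comp_aux hp (isHom_comp_aux hγ hq), ?_, ?_, ?_, ?_⟩
  · exact bp.comp (bγ.comp bq)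
  · rw [LinearMap.range_comp, Submodule.map_comp, Submodule.map_comp,
      ← Submodule.map_comp p q, hqp, Submodule.map_id, mγ]
  · ext x
    have := LinearMap.congr_fun h1 x
    simp only [LinearMap.comp_apply] at this ⊢
    rw [e1, this]
  · ext x
    have := LinearMap.congr_fun h2 (q x)
    simp only [LinearMap.comp_apply] at this ⊢
    rw [this, e2]

theorem stmt11 {E₁ : Type*} [AddCommGroup E₁] [Module k E₁]
    {E₂ : Type*} [AddCommGroup E₂] [Module k E₂]
    (lam : k) (ΔC : C →ₗ[k] C ⊗[k] C) (RC : C →ₗ[k] C)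
    (ΔM : M →ₗ[k] M ⊗[k] M) (RM : M →ₗ[k] M)
    (ΔE₁ : E₁ →ₗ[k] E₁ ⊗[k] E₁) (RE₁ : E₁ →ₗ[k] E₁)
    (ΔE₂ : E₂ →ₗ[k] E₂ ⊗[k] E₂) (RE₂ : E₂ →ₗ[k] E₂)
    (hC : IsRBLC lam ΔC RC) (hM : IsRBLC lam ΔM RM)
    (hE₁ : IsRBLC lam ΔE₁ RE₁) (hE₂ : IsRBLC lam ΔE₂ RE₂)
    (f₁ : C →ₗ[k] E₁) (g₁ : E₁ →ₗ[k] M) (f₂ : C →ₗ[k] E₂) (g₂ : E₂ →ₗ[k] M)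
    (homf₁ : IsHom ΔC RC ΔE₁ RE₁ f₁) (homg₁ : IsHom ΔE₁ RE₁ ΔM RM g₁)
    (injf₁ : Function.Injective f₁) (surjg₁ : Function.Surjective g₁)
    (hexact₁ : LinearMap.range f₁ = LinearMap.ker g₁)
    (homf₂ : IsHom ΔC RC ΔE₂ RE₂ f₂) (homg₂ : IsHom ΔE₂ RE₂ ΔM RM g₂)
    (injf₂ : Function.Injective f₂) (surjg₂ : Function.Surjective g₂)
    (hexact₂ : LinearMap.range f₂ = LinearMap.ker g₂)
    -- the two extensions are equivalent:
    (hequiv : ∃ θ : E₁ →ₗ[k] E₂, IsHom ΔE₁ RE₁ ΔE₂ RE₂ θ ∧ Function.Bijective θ ∧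
        θ ∘ₗ f₁ = f₂ ∧ g₂ ∘ₗ θ = g₁)
    -- `(α, β)` is a pair of automorphisms:
    (α : C →ₗ[k] C) (β : M →ₗ[k] M)
    (homα : IsHom ΔC RC ΔC RC α) (bijα : Function.Bijective α)
    (homβ : IsHom ΔM RM ΔM RM β) (bijβ : Function.Bijective β) :
    Extensible ΔE₁ RE₁ f₁ g₁ α β ↔ Extensible ΔE₂ RE₂ f₂ g₂ α β := by
  obtain ⟨θ, hθ, bθ, hf, hg⟩ := hequiv
  let e := LinearEquiv.ofBijective θ bθ
  have hqp : e.symm.toLinearMap ∘ₗ θ = LinearMap.id :=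
    LinearMap.ext fun x => e.symm_apply_apply x
  have hpq : θ ∘ₗ e.symm.toLinearMap = LinearMap.id :=
    LinearMap.ext fun x => e.apply_symm_apply x
  have hq := isHom_inv_aux hθ hqp hpq
  refine ⟨extensible_transfer_aux hθ hq hqp hpq hf hg,
    extensible_transfer_aux hq hθ hpq hqp ?_ ?_⟩
  · rw [← hf, ← LinearMap.comp_assoc, hqp, LinearMap.id_comp]
  · rw [← hg, LinearMap.comp_assoc, hpq, LinearMap.comp_id]

end
end
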